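/- Let θ₁,…,θ_k be real numbers such that 1, θ₁,…,θ_k are linearly independent over ℚ. Then the sequence (frac(p_j θ₁),…,frac(p_j θ_k)), where p_j is the j-th prime, is dense in (0,1)^k. -/

import Mathlib

/-!
Weighted by `Λ(n) log n`, the points `n • θ` with `n ≤ N` equidistribute on the torus as soon as
the sums `∑ Λ(n) log n e(nα)` are `o(N log N)` at the irrational frequencies `α = ∑ h i * θ i`,
and for density it is enough that this holds along one filter of lengths `N` common to all
frequencies. Prime powers carry negligible weight.

Selberg's identity `Λ log + Λ * Λ = μ * log²` splits these sums into the type I sum of `μ * log²`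
and the type II sum of `Λ * Λ`. If a rational approximation to `α` has a large denominator, both
are small by the usual bilinear estimates. If `α` is very close to `r / q` with `q` small, the sum
at `r / q` is small because an upper bound for `Λ` in residue classes modulo `q`, of Chebyshev's
quality, combined with Parseval modulo `q` already saves `√q / (1 + log q) ^ 2`; no asymptotics
for primes in arithmetic progressions are needed, as `q → ∞` with `N` for irrational `α`.

Neither case applies when `q` is small and `α` only moderately close to `r / q`. For a given `α`
this happens for at most one of the lengths `X, X², …, X ^ J`, so when `J` exceeds the number of
frequencies some length is good for all of them.
-/

section PrimeExponentialSums

open Finset Real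
open scoped FourierTransform ArithmeticFunction.vonMangoldt

section ExponentialSums

theorem fourierChar_intCast (n : ℤ) : 𝐞 (n : ℝ) = 1 := by
  ext
  rw [Real.fourierChar_apply, Circle.coe_one, Complex.exp_eq_one_iff]
  exact ⟨n, by push_cast; ring⟩

theorem norm_fourierChar_sub_one (x : ℝ) : ‖(𝐞 x : ℂ) - 1‖ = 2 * |sin (π * x)| := by
  have h := Complex.norm_exp_I_mul_ofReal_sub_one (2 * π * x)
  rw [mul_comm Complex.I] at h
  rw [Real.fourierChar_apply, h, norm_mul, Real.norm_eq_abs, Real.norm_eq_abs, abs_two,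
    show 2 * π * x / 2 = π * x by ring]

theorem norm_fourierChar_sub_one_le (x : ℝ) : ‖(𝐞 x : ℂ) - 1‖ ≤ 2 * π * |x| := by
  rw [norm_fourierChar_sub_one, mul_assoc, ← abs_of_pos pi_pos, ← abs_mul, abs_of_pos pi_pos]
  exact mul_le_mul_of_nonneg_left (abs_sin_le_abs (x := π * x)) zero_le_two

theorem four_mul_norm_le_norm_fourierChar_sub_one (x : ℝ) :
    4 * ‖(x : UnitAddCircle)‖ ≤ ‖(𝐞 x : ℂ) - 1‖ := by
  have hround : (𝐞 x : ℂ) = 𝐞 (x - round x) := by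
    have h := congrArg (fun u : Circle ↦ (u : ℂ)) (AddChar.map_add_eq_mul 𝐞 (x - round x) (round x))
    simpa [fourierChar_intCast] using h
  have hsmall : |π * (x - round x)| ≤ π / 2 := by
    rw [abs_mul, abs_of_pos pi_pos]
    nlinarith [abs_sub_round x, pi_pos]
  have hsin := Real.mul_abs_le_abs_sin hsmall
  rw [abs_mul, abs_of_pos pi_pos, ← mul_assoc, div_mul_cancel₀ _ pi_ne_zero] at hsin
  rw [UnitAddCircle.norm_eq, hround, norm_fourierChar_sub_one]
  linarith

theorem fourierChar_natCast_mul (γ : ℝ) (n : ℕ) : (𝐞 (n * γ) : ℂ) = (𝐞 γ : ℂ) ^ n := by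
  rw [← nsmul_eq_mul, AddChar.map_nsmul_eq_pow, Circle.coe_pow]

theorem norm_sum_Ioc_fourierChar_le {γ : ℝ} (hγ : ‖(γ : UnitAddCircle)‖ ≠ 0) (a b : ℕ) :
    ‖∑ n ∈ Ioc a b, (𝐞 (n * γ) : ℂ)‖ ≤ ‖(γ : UnitAddCircle)‖⁻¹ := by
  have hpos : 0 < ‖(γ : UnitAddCircle)‖ := lt_of_le_of_ne (norm_nonneg _) hγ.symm
  have hgap := four_mul_norm_le_norm_fourierChar_sub_one γ
  rcases le_total b a with hba | hab
  · simp [Ioc_eq_empty_of_le hba, hpos.le]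
  have hgeom : (∑ n ∈ Ioc a b, (𝐞 (n * γ) : ℂ)) * (𝐞 γ - 1)
      = (𝐞 γ : ℂ) ^ (b + 1) - (𝐞 γ : ℂ) ^ (a + 1) := by
    simp_rw [fourierChar_natCast_mul]
    rw [← Ico_add_one_add_one_eq_Ioc, geom_sum_Ico_mul _ (by lia)]
  have hdiff : ‖(𝐞 γ : ℂ) ^ (b + 1) - (𝐞 γ : ℂ) ^ (a + 1)‖ ≤ 2 :=
    (norm_sub_le _ _).trans (by simp [Circle.norm_coe]; norm_num)
  have hmul : ‖∑ n ∈ Ioc a b, (𝐞 (n * γ) : ℂ)‖ * (4 * ‖(γ : UnitAddCircle)‖) ≤ 2 :=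
    calc _ ≤ ‖∑ n ∈ Ioc a b, (𝐞 (n * γ) : ℂ)‖ * ‖(𝐞 γ : ℂ) - 1‖ := by gcongr
      _ ≤ 2 := by rwa [← norm_mul, hgeom]
  rw [← one_div, le_div_iff₀ hpos]
  linarith

/- Summation by parts from the right: `∑ g f = g 0 ∑ f + ∑ₖ (g (k+1) - g k) ∑_{k < n ≤ M} f`, with
nonnegative coefficients adding up to `g M`. -/
theorem norm_sum_monotone_mul_le {f : ℕ → ℂ} {g : ℕ → ℝ} {C : ℝ} (hg : Monotone g) (hg0 : 0 ≤ g 0)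
    (hf : ∀ a b, ‖∑ n ∈ Ioc a b, f n‖ ≤ C) (M : ℕ) :
    ‖∑ n ∈ Ioc 0 M, (g n : ℂ) * f n‖ ≤ g M * C := by
  have hparts : ∀ N, ∑ n ∈ Ioc 0 N, (g n : ℂ) * f n = g 0 * ∑ n ∈ Ioc 0 N, f n
      + ∑ k ∈ range N, ((g (k + 1) - g k : ℝ) : ℂ) * ∑ n ∈ Ioc k N, f n := by
    intro N
    induction N with
    | zero => simp
    | succ N ih =>
      have hinner : ∀ k ∈ range N, ((g (k + 1) - g k : ℝ) : ℂ) * ∑ n ∈ Ioc k (N + 1), f n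
          = ((g (k + 1) - g k : ℝ) : ℂ) * ∑ n ∈ Ioc k N, f n
            + ((g (k + 1) - g k : ℝ) : ℂ) * f (N + 1) := fun k hk ↦ by
        rw [sum_Ioc_succ_top (mem_range.mp hk).le, mul_add]
      have htele : ∑ k ∈ range (N + 1), ((g (k + 1) - g k : ℝ) : ℂ) = g (N + 1) - g 0 := by
        rw [← Complex.ofReal_sum, sum_range_sub, Complex.ofReal_sub]
      rw [sum_range_succ] at htele
      rw [sum_Ioc_succ_top N.zero_le, sum_Ioc_succ_top N.zero_le, ih, sum_range_succ,
        sum_congr rfl hinner, sum_add_distrib, ← sum_mul, sum_Ioc_succ_top le_rfl, Ioc_self,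
        sum_empty]
      linear_combination (-f (N + 1)) * htele
  have hstep : ∀ k, 0 ≤ g (k + 1) - g k := fun k ↦ sub_nonneg.mpr (hg k.le_succ)
  calc ‖∑ n ∈ Ioc 0 M, (g n : ℂ) * f n‖
      ≤ g 0 * C + ∑ k ∈ range M, (g (k + 1) - g k) * C := by
        rw [hparts]
        refine (norm_add_le _ _).trans (add_le_add ?_ (norm_sum_le_of_le _ fun k _ ↦ ?_))
        · rw [norm_mul, Complex.norm_of_nonneg hg0]
          exact mul_le_mul_of_nonneg_left (hf _ _) hg0
        · rw [norm_mul, Complex.norm_of_nonneg (hstep k)]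
          exact mul_le_mul_of_nonneg_left (hf _ _) (hstep k)
    _ = g M * C := by rw [← sum_mul, sum_range_sub]; ring

end ExponentialSums

section ReciprocalSums

theorem sum_Ioc_inv_le (N : ℕ) : ∑ n ∈ Ioc 0 N, (n : ℝ)⁻¹ ≤ 1 + log N := by
  have h := harmonic_le_one_add_log N
  rw [harmonic_eq_sum_Icc, ← zero_add 1, Icc_add_one_left_eq_Ioc] at h
  push_cast at h
  exact h

theorem sum_Ioc_mul_eq_sum_sum_block {M : Type*} [AddCommMonoid M] (f : ℕ → M) (q K : ℕ) :
    ∑ n ∈ Ioc 0 (q * K), f n = ∑ j ∈ range K, ∑ n ∈ Ioc (q * j) (q * j + q), f n := by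
  induction K with
  | zero => simp
  | succ K ih =>
    rw [sum_range_succ, ← ih, mul_add_one, sum_Ioc_consecutive _ (Nat.zero_le _) (by lia)]

theorem norm_natCast_div_inv_le {j q : ℕ} (hj : 0 < j) (hjq : j < q) :
    ‖(((j : ℝ) / q : ℝ) : UnitAddCircle)‖⁻¹ ≤ q * (j : ℝ)⁻¹ + q * ((q - j : ℕ) : ℝ)⁻¹ := by
  have hnorm := AddCircle.norm_div_natCast (p := (1 : ℝ)) (m := j) (n := q)
  rw [mul_one, one_mul, Nat.mod_eq_of_lt hjq] at hnorm
  rw [hnorm, inv_div, div_eq_mul_inv]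
  rcases min_choice j (q - j) with h | h <;> rw [h]
  · exact le_add_of_nonneg_right (by positivity)
  · exact le_add_of_nonneg_left (by positivity)

theorem isUnit_intCast_zmod {q : ℕ} {r : ℤ} (hrq : IsCoprime r q) : IsUnit (r : ZMod q) := by
  simpa [isCoprime_zero_right] using hrq.map (Int.castRingHom (ZMod q))

variable {q : ℕ} [NeZero q]

theorem sum_Ioc_natCast_zmod {M : Type*} [AddCommMonoid M] (f : ZMod q → M) (A : ℕ) :
    ∑ n ∈ Ioc A (A + q), f n = ∑ c, f c := by
  have hinj : Set.InjOn (fun n : ℕ ↦ (n : ZMod q)) (Ioc A (A + q)) := by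
    intro m hm n hn hmn
    rw [coe_Ioc, Set.mem_Ioc] at hm hn
    refine Nat.ModEq.eq_of_abs_lt ((ZMod.natCast_eq_natCast_iff _ _ _).mp hmn) ?_
    rw [abs_lt]
    lia
  have himage : (Ioc A (A + q)).image (fun n : ℕ ↦ (n : ZMod q)) = univ := by
    rw [← card_eq_iff_eq_univ, card_image_of_injOn hinj, Nat.card_Ioc, ZMod.card]
    lia
  rw [← himage, sum_image hinj]

/- The term `c = 0` vanishes because `0⁻¹ = 0`. -/
theorem sum_norm_toAddCircle_inv_le :
    ∑ c : ZMod q, ‖ZMod.toAddCircle c‖⁻¹ ≤ 2 * q * (1 + log q) := by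
  obtain ⟨p, rfl⟩ := Nat.exists_eq_add_one_of_ne_zero (NeZero.ne q)
  have hterm : ∀ j ∈ Ioc 0 p, ‖ZMod.toAddCircle (j : ZMod (p + 1))‖⁻¹
      ≤ ((p + 1 : ℕ) : ℝ) * (j : ℝ)⁻¹ + (p + 1 : ℕ) * ((p + 1 - j : ℕ) : ℝ)⁻¹ := fun j hj ↦ by
    rw [ZMod.toAddCircle_natCast]
    have := mem_Ioc.mp hj
    exact norm_natCast_div_inv_le (by lia) (by lia)
  have hreflect : ∑ j ∈ Ioc 0 p, ((p + 1 - j : ℕ) : ℝ)⁻¹ = ∑ j ∈ Ioc 0 p, (j : ℝ)⁻¹ :=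
    sum_nbij' (fun j ↦ p + 1 - j) (fun j ↦ p + 1 - j) (by grind) (by grind) (by grind) (by grind)
      (by simp)
  have hlog : log p ≤ log (p + 1 : ℕ) := by
    rcases p.eq_zero_or_pos with rfl | hp
    · simp
    · gcongr; lia
  rw [← sum_Ioc_natCast_zmod (fun c ↦ ‖ZMod.toAddCircle c‖⁻¹) 0, zero_add,
    sum_Ioc_succ_top p.zero_le, ZMod.natCast_self, map_zero, norm_zero, inv_zero, add_zero]
  calc _ ≤ ((p + 1 : ℕ) : ℝ) * ∑ j ∈ Ioc 0 p, (j : ℝ)⁻¹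
        + (p + 1 : ℕ) * ∑ j ∈ Ioc 0 p, ((p + 1 - j : ℕ) : ℝ)⁻¹ := by
        rw [mul_sum, mul_sum, ← sum_add_distrib]
        exact sum_le_sum hterm
    _ = 2 * (p + 1 : ℕ) * ∑ j ∈ Ioc 0 p, (j : ℝ)⁻¹ := by rw [hreflect]; ring
    _ ≤ 2 * (p + 1 : ℕ) * (1 + log (p + 1 : ℕ)) := by
        gcongr
        linarith [sum_Ioc_inv_le p]

variable {r : ℤ}

theorem natCast_mul_div_eq_toAddCircle (h : ℕ) :
    ((h * (r / q) : ℝ) : UnitAddCircle) = ZMod.toAddCircle ((h : ZMod q) * (r : ZMod q)) := by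
  have hcast : (h : ZMod q) * (r : ZMod q) = ((h * r : ℤ) : ZMod q) := by push_cast; rfl
  rw [hcast, ZMod.toAddCircle_intCast]
  congr 1
  push_cast
  ring

theorem sum_block_norm_mul_div_inv_le (hrq : IsCoprime r q) (A : ℕ) :
    ∑ h ∈ Ioc A (A + q), ‖((h * (r / q) : ℝ) : UnitAddCircle)‖⁻¹ ≤ 2 * q * (1 + log q) := by
  simp_rw [natCast_mul_div_eq_toAddCircle]
  rw [sum_Ioc_natCast_zmod (fun c ↦ ‖ZMod.toAddCircle (c * (r : ZMod q))‖⁻¹)]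
  obtain ⟨u, hu⟩ := isUnit_intCast_zmod hrq
  rw [← hu]
  exact (Equiv.sum_comp u.mulRight fun c ↦ ‖ZMod.toAddCircle c‖⁻¹).trans_le
    sum_norm_toAddCircle_inv_le

theorem inv_le_norm_mul_div (hrq : IsCoprime r q) {h : ℕ} (hqh : ¬ q ∣ h) :
    (q : ℝ)⁻¹ ≤ ‖((h * (r / q) : ℝ) : UnitAddCircle)‖ := by
  have hq : (0 : ℝ) < q := by exact_mod_cast Nat.pos_of_neZero q
  set m := round (h * (r / q) : ℝ)
  have hne : (h : ℤ) * r - m * q ≠ 0 := fun h0 ↦ hqh <| by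
    have hdvd : (q : ℤ) ∣ h * r := ⟨m, by linarith⟩
    exact_mod_cast hrq.symm.dvd_of_dvd_mul_right hdvd
  have hone : (1 : ℝ) ≤ |(h : ℝ) * r - m * q| := by exact_mod_cast Int.one_le_abs hne
  have heq : (h * (r / q) : ℝ) - m = (h * r - m * q) / q := by field_simp
  rw [UnitAddCircle.norm_eq, heq, abs_div, Nat.abs_cast, inv_eq_one_div]
  gcongr

theorem norm_mul_div_le_two_mul_norm (hrq : IsCoprime r q) {α : ℝ} {h : ℕ}
    (hα : 2 * h * |q * α - r| ≤ 1) (hqh : ¬ q ∣ h) :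
    ‖((h * (r / q) : ℝ) : UnitAddCircle)‖ ≤ 2 * ‖((h * α : ℝ) : UnitAddCircle)‖ := by
  have hq : (0 : ℝ) < q := by exact_mod_cast Nat.pos_of_neZero q
  have hdist : ‖((h * (r / q) - h * α : ℝ) : UnitAddCircle)‖ ≤ (q : ℝ)⁻¹ / 2 := by
    rw [UnitAddCircle.norm_eq]
    refine (round_le _ 0).trans ?_
    have : h * (r / q) - h * α = -(h * (q * α - r) / q) := by field_simp; ring
    rw [Int.cast_zero, sub_zero, this, abs_neg, abs_div, abs_mul, Nat.abs_cast, Nat.abs_cast,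
      div_le_iff₀ hq, div_mul_eq_mul_div, inv_mul_cancel₀ hq.ne']
    linarith
  have htri := norm_add_le ((h * (r / q) - h * α : ℝ) : UnitAddCircle) ((h * α : ℝ) : UnitAddCircle)
  rw [← AddCircle.coe_add, sub_add_cancel] at htri
  linarith [inv_le_norm_mul_div hrq hqh]

theorem norm_natCast_mul_ne_zero (hrq : IsCoprime r q) {α : ℝ} {h : ℕ}
    (hα : 2 * h * |q * α - r| ≤ 1) (hqh : ¬ q ∣ h) : ‖((h * α : ℝ) : UnitAddCircle)‖ ≠ 0 := by
  have hq : 0 < (q : ℝ)⁻¹ := inv_pos.mpr (Nat.cast_pos.mpr (Nat.pos_of_neZero q))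
  have := hq.trans_le
    ((inv_le_norm_mul_div hrq hqh).trans (norm_mul_div_le_two_mul_norm hrq hα hqh))
  exact (pos_of_mul_pos_right this zero_le_two).ne'

theorem sum_norm_mul_inv_le (hrq : IsCoprime r q) {α : ℝ} {X : ℕ} (hα : 2 * X * |q * α - r| ≤ 1) :
    ∑ h ∈ Ioc 0 X with ¬ q ∣ h, ‖((h * α : ℝ) : UnitAddCircle)‖⁻¹
      ≤ 4 * (X + q) * (1 + log q) := by
  have hq : (0 : ℝ) < q := by exact_mod_cast Nat.pos_of_neZero q
  have hcover : X ≤ q * (X / q + 1) := (Nat.lt_mul_div_succ X (Nat.pos_of_neZero q)).le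
  have hterm : ∀ h ∈ (Ioc 0 X).filter (¬ q ∣ ·), ‖((h * α : ℝ) : UnitAddCircle)‖⁻¹
      ≤ 2 * ‖((h * (r / q) : ℝ) : UnitAddCircle)‖⁻¹ := by
    intro h hh
    obtain ⟨hmem, hqh⟩ := mem_filter.mp hh
    have hhX : (h : ℝ) ≤ X := by exact_mod_cast (mem_Ioc.mp hmem).2
    have hle := norm_mul_div_le_two_mul_norm hrq (α := α) (h := h)
      (hα.trans' (by gcongr)) hqh
    have hpos := (inv_pos.mpr hq).trans_le (inv_le_norm_mul_div hrq hqh)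
    calc _ ≤ (‖((h * (r / q) : ℝ) : UnitAddCircle)‖ / 2)⁻¹ := by gcongr; linarith
      _ = _ := by rw [inv_div]; ring
  calc _ ≤ ∑ h ∈ Ioc 0 (q * (X / q + 1)), 2 * ‖((h * (r / q) : ℝ) : UnitAddCircle)‖⁻¹ := by
        refine (sum_le_sum hterm).trans
          (sum_le_sum_of_subset_of_nonneg ?_ fun _ _ _ ↦ by positivity)
        exact (filter_subset _ _).trans (Ioc_subset_Ioc_right hcover)
    _ ≤ ∑ j ∈ range (X / q + 1), 2 * (2 * q * (1 + log q)) := by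
        rw [sum_Ioc_mul_eq_sum_sum_block]
        refine sum_le_sum fun j _ ↦ ?_
        rw [← mul_sum]
        gcongr
        exact sum_block_norm_mul_div_inv_le hrq _
    _ = 4 * ((X / q : ℕ) * q + q) * (1 + log q) := by
        rw [sum_const, card_range, nsmul_eq_mul]; push_cast; ring
    _ ≤ 4 * (X + q) * (1 + log q) := by
        have : ((X / q : ℕ) : ℝ) * q ≤ X := by exact_mod_cast Nat.div_mul_le_self X q
        have : 0 ≤ log q := log_natCast_nonneg q
        gcongr

end ReciprocalSums

section ArithmeticSums

open scoped Nat ArithmeticFunction.Moebius ArithmeticFunction.zeta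
open ArithmeticFunction (vonMangoldt_nonneg vonMangoldt_le_log vonMangoldt_mul_zeta
  coe_moebius_mul_coe_zeta zeta_mul_vonMangoldt)

theorem sum_arithmeticFunction_mul_mul_eq_sum_sum (f g : ArithmeticFunction ℝ) (ω : ℕ → ℂ) (N : ℕ) :
    ∑ n ∈ Ioc 0 N, ((f * g) n : ℂ) * ω n
      = ∑ a ∈ Ioc 0 N, f a * ∑ b ∈ Ioc 0 (N / a), g b * ω (a * b) := by
  have hfiber : ∀ n ∈ Ioc 0 N, ((f * g) n : ℂ) * ω n
      = ∑ x ∈ Ioc 0 N ×ˢ Ioc 0 N with x.1 * x.2 = n, (f x.1 * (g x.2 * ω (x.1 * x.2)) : ℂ) := by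
    intro n hn
    obtain ⟨hn0, hnN⟩ := mem_Ioc.mp hn
    rw [ArithmeticFunction.mul_apply, Nat.divisorsAntidiagonal_eq_prod_filter_of_le hn0.ne' hnN,
      Complex.ofReal_sum, sum_mul]
    refine sum_congr rfl fun x hx ↦ ?_
    rw [(mem_filter.mp hx).2, Complex.ofReal_mul, mul_assoc]
  have hrow : ∀ a ∈ Ioc 0 N, Ioc 0 (N / a) = {b ∈ Ioc 0 N | a * b ≤ N} := by
    intro a ha
    have ha0 := (mem_Ioc.mp ha).1
    ext b
    simp only [mem_Ioc, mem_filter, Nat.le_div_iff_mul_le ha0, mul_comm b]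
    exact ⟨fun h ↦ ⟨⟨h.1, (Nat.le_mul_of_pos_left b ha0).trans h.2⟩, h.2⟩, fun h ↦ ⟨h.1.1, h.2⟩⟩
  calc _ = ∑ x ∈ Ioc 0 N ×ˢ Ioc 0 N with x.1 * x.2 ∈ Ioc 0 N,
        (f x.1 * (g x.2 * ω (x.1 * x.2)) : ℂ) := by
        rw [sum_congr rfl hfiber]
        exact (sum_fiberwise_eq_sum_filter _ _ (fun x : ℕ × ℕ ↦ x.1 * x.2) _)
    _ = ∑ x ∈ Ioc 0 N ×ˢ Ioc 0 N with x.1 * x.2 ≤ N,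
        (f x.1 * (g x.2 * ω (x.1 * x.2)) : ℂ) := by
        refine sum_congr (filter_congr fun x hx ↦ ?_) fun _ _ ↦ rfl
        obtain ⟨h1, h2⟩ := mem_product.mp hx
        have := Nat.mul_pos (mem_Ioc.mp h1).1 (mem_Ioc.mp h2).1
        simp [this]
    _ = _ := by
        rw [sum_filter, sum_product]
        refine sum_congr rfl fun a ha ↦ ?_
        rw [hrow a ha, mul_sum, sum_filter]

theorem vonMangoldt_pmul_log_add_mul_self :
    ArithmeticFunction.pmul Λ ArithmeticFunction.log + Λ * Λ
      = (μ : ArithmeticFunction ℝ) * ArithmeticFunction.log.pmul ArithmeticFunction.log := by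
  have hzeta : (ζ : ArithmeticFunction ℝ) * (.pmul Λ ArithmeticFunction.log + Λ * Λ)
      = ArithmeticFunction.log.pmul ArithmeticFunction.log := by
    rw [mul_add, ← mul_assoc, zeta_mul_vonMangoldt]
    ext n
    rw [ArithmeticFunction.add_apply, ArithmeticFunction.coe_zeta_mul_apply,
      ArithmeticFunction.mul_apply, Nat.sum_divisorsAntidiagonal'
        (f := fun a b ↦ ArithmeticFunction.log a * Λ b), ← sum_add_distrib]
    simp only [ArithmeticFunction.pmul_apply, ArithmeticFunction.log_apply]
    nth_rw 2 [← ArithmeticFunction.vonMangoldt_sum]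
    rw [mul_sum]
    refine sum_congr rfl fun d hd ↦ ?_
    obtain ⟨hdn, hn⟩ := Nat.mem_divisors.mp hd
    have hd0 : (d : ℝ) ≠ 0 := by exact_mod_cast (Nat.pos_of_dvd_of_pos hdn (by lia)).ne'
    rw [Nat.cast_div hdn hd0, log_div (by exact_mod_cast hn) hd0]
    ring
  rw [← hzeta, ← mul_assoc, coe_moebius_mul_coe_zeta, one_mul]

theorem sum_vonMangoldt_mul_log_mul_eq (ω : ℕ → ℂ) (N : ℕ) :
    ∑ n ∈ Ioc 0 N, (Λ n * log n : ℝ) * ω n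
      = ∑ d ∈ Ioc 0 N, (μ d : ℂ) * ∑ m ∈ Ioc 0 (N / d), (log m ^ 2 : ℝ) * ω (d * m)
        - ∑ a ∈ Ioc 0 N, (Λ a : ℂ) * ∑ b ∈ Ioc 0 (N / a), (Λ b : ℂ) * ω (a * b) := by
  have hselberg := sum_arithmeticFunction_mul_mul_eq_sum_sum μ
    (ArithmeticFunction.log.pmul ArithmeticFunction.log) ω N
  simp only [← vonMangoldt_pmul_log_add_mul_self, ArithmeticFunction.add_apply,
    ArithmeticFunction.pmul_apply, ArithmeticFunction.log_apply, Complex.ofReal_add, add_mul,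
    sum_add_distrib, sum_arithmeticFunction_mul_mul_eq_sum_sum Λ Λ] at hselberg
  simp only [sq]
  rw [eq_sub_iff_add_eq, hselberg]
  simp

theorem chebyshevPsi_natCast_eq (N : ℕ) : Chebyshev.psi N = ∑ n ∈ Ioc 0 N, Λ n := by
  rw [Chebyshev.psi, Nat.floor_natCast]

theorem sum_vonMangoldt_le (N : ℕ) : ∑ n ∈ Ioc 0 N, Λ n ≤ 6 * N := by
  have hlog4 : log 4 ≤ 2 := by
    rw [show (4 : ℝ) = 2 ^ 2 by norm_num, log_pow]
    push_cast
    linarith [log_two_lt_d9]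
  rw [← chebyshevPsi_natCast_eq]
  refine (Chebyshev.psi_le_const_mul_self N.cast_nonneg).trans ?_
  gcongr
  linarith

theorem sum_vonMangoldt_mul_div_eq_log_factorial (N : ℕ) :
    ∑ n ∈ Ioc 0 N, Λ n * (N / n : ℕ) = log N ! := by
  rw [← ArithmeticFunction.sum_Ioc_mul_zeta_eq_sum, vonMangoldt_mul_zeta]
  induction N with
  | zero => simp
  | succ N ih =>
    rw [sum_Ioc_succ_top N.zero_le, ih, Nat.factorial_succ, Nat.cast_mul,
      log_mul (by positivity) (by positivity), add_comm, ArithmeticFunction.log_apply]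

theorem log_factorial_le (N : ℕ) : log N ! ≤ N * log N := by
  rw [← log_pow]
  exact log_le_log (by positivity) (by exact_mod_cast N.factorial_le_pow)

theorem sum_vonMangoldt_div_le {N : ℕ} (hN : N ≠ 0) :
    ∑ n ∈ Ioc 0 N, Λ n / n ≤ log N + 6 := by
  have hN0 : (0 : ℝ) < N := by exact_mod_cast Nat.pos_of_ne_zero hN
  have hterm : ∀ n ∈ Ioc 0 N, Λ n / n * N ≤ Λ n * (N / n : ℕ) + Λ n := fun n hn ↦ by
    have hn0 : (0 : ℝ) < n := by exact_mod_cast (mem_Ioc.mp hn).1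
    have hdiv : (N : ℝ) / n ≤ (N / n : ℕ) + 1 := by
      rw [div_le_iff₀ hn0]
      exact_mod_cast (Nat.lt_div_mul_add (mem_Ioc.mp hn).1).le.trans_eq (by ring)
    calc Λ n / n * N = Λ n * (N / n) := by ring
      _ ≤ Λ n * ((N / n : ℕ) + 1) := mul_le_mul_of_nonneg_left hdiv vonMangoldt_nonneg
      _ = _ := by ring
  refine le_of_mul_le_mul_right ?_ hN0
  calc _ ≤ ∑ n ∈ Ioc 0 N, (Λ n * (N / n : ℕ) + Λ n) := by
        rw [sum_mul]
        exact sum_le_sum hterm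
    _ ≤ N * log N + 6 * N := by
        rw [sum_add_distrib, sum_vonMangoldt_mul_div_eq_log_factorial]
        exact add_le_add (log_factorial_le N) (sum_vonMangoldt_le N)
    _ = _ := by ring

theorem sum_vonMangoldt_mul_sum_le {M N : ℕ} (hM : M ≠ 0) :
    ∑ a ∈ Ioc 0 M, Λ a * ∑ b ∈ Ioc 0 (N / a), Λ b ≤ 6 * N * (log M + 6) :=
  calc _ ≤ ∑ a ∈ Ioc 0 M, 6 * N * (Λ a / a) := by
        refine sum_le_sum fun a _ ↦ ?_
        calc _ ≤ Λ a * (6 * (N / a)) := by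
              refine mul_le_mul_of_nonneg_left ?_ vonMangoldt_nonneg
              exact (sum_vonMangoldt_le _).trans (by gcongr; exact Nat.cast_div_le)
          _ = _ := by ring
    _ ≤ _ := by
        rw [← mul_sum]
        gcongr
        exact sum_vonMangoldt_div_le hM

theorem monotone_log_natCast : Monotone fun n : ℕ ↦ log n := by
  intro a b hab
  rcases a.eq_zero_or_pos with rfl | ha
  · simpa using log_natCast_nonneg b
  · exact log_le_log (Nat.cast_pos.mpr ha) (Nat.cast_le.mpr hab)

theorem sum_vonMangoldt_mul_log_le (N : ℕ) : ∑ n ∈ Ioc 0 N, Λ n * log n ≤ 6 * N * log N :=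
  calc _ ≤ ∑ n ∈ Ioc 0 N, Λ n * log N := sum_le_sum fun _ hn ↦
        mul_le_mul_of_nonneg_left (monotone_log_natCast (mem_Ioc.mp hn).2) vonMangoldt_nonneg
    _ ≤ _ := by
        rw [← sum_mul]
        gcongr
        exact sum_vonMangoldt_le N

theorem sum_moebius_mul_log_sq_le {N : ℕ} :
    ∑ n ∈ Ioc 0 N, ((μ : ArithmeticFunction ℝ)
      * ArithmeticFunction.log.pmul ArithmeticFunction.log) n ≤ 36 * N * (1 + log N) := by
  rcases eq_or_ne N 0 with rfl | hN
  · simp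
  rw [← vonMangoldt_pmul_log_add_mul_self]
  simp only [ArithmeticFunction.add_apply, sum_add_distrib,
    ArithmeticFunction.sum_Ioc_mul_eq_sum_sum, ArithmeticFunction.pmul_apply,
    ArithmeticFunction.log_apply]
  have hN0 : (0 : ℝ) ≤ N * log N := mul_nonneg N.cast_nonneg (log_natCast_nonneg N)
  linarith [sum_vonMangoldt_mul_sum_le (N := N) hN, sum_vonMangoldt_mul_log_le N]

theorem sum_Ioc_sum_Ioc_div_comm {M : Type*} [AddCommMonoid M] (F : ℕ → ℕ → M) {Z : ℕ} (hZ : Z ≠ 0)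
    (N : ℕ) : ∑ a ∈ Ioc Z N, ∑ b ∈ Ioc 0 (N / a), F a b
      = ∑ b ∈ Ioc 0 (N / Z), ∑ a ∈ Ioc Z (N / b), F a b := by
  refine sum_comm' fun a b ↦ ?_
  simp only [mem_Ioc]
  have hdiv : ∀ {x y : ℕ}, 0 < x → (y ≤ N / x ↔ y * x ≤ N) := Nat.le_div_iff_mul_le
  constructor
  · rintro ⟨⟨hZa, -⟩, hb, hba⟩
    rw [hdiv (by lia)] at hba
    refine ⟨⟨hZa, (hdiv hb).mpr (by rwa [mul_comm])⟩, hb, (hdiv (by lia)).mpr ?_⟩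
    exact (Nat.mul_le_mul_left b hZa.le).trans hba
  · rintro ⟨⟨hZa, hab⟩, hb, -⟩
    rw [hdiv hb] at hab
    exact ⟨⟨hZa, (Nat.le_mul_of_pos_right a hb).trans hab⟩, hb,
      (hdiv (by lia)).mpr (by rwa [mul_comm])⟩

end ArithmeticSums

section ChebyshevArithmeticProgression

open scoped Nat
open ArithmeticFunction (vonMangoldt_nonneg)

theorem sum_primeFactors_log_le {q : ℕ} (hq : q ≠ 0) : ∑ p ∈ q.primeFactors, log p ≤ log q := by
  rw [← log_prod fun p hp ↦ by exact_mod_cast (Nat.prime_of_mem_primeFactors hp).ne_zero,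
    ← Nat.cast_prod]
  gcongr
  · exact_mod_cast prod_pos fun p hp ↦ (Nat.prime_of_mem_primeFactors hp).pos
  · exact Nat.le_of_dvd (Nat.pos_of_ne_zero hq) (Nat.prod_primeFactors_dvd q)

theorem sum_Ioc_inv_pow_le_one {p : ℝ} (hp : 2 ≤ p) (n : ℕ) : ∑ j ∈ Ioc 0 n, (p ^ j)⁻¹ ≤ 1 := by
  have hinv : p⁻¹ ≤ 2⁻¹ := by gcongr
  have hpos : 0 ≤ p⁻¹ := by positivity
  simp_rw [← inv_pow]
  rw [← Ico_add_one_add_one_eq_Ioc]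
  refine (geom_sum_Ico_le_of_lt_one hpos (by linarith)).trans ?_
  rw [zero_add, pow_one, div_le_one (by linarith)]
  linarith

theorem sum_vonMangoldt_div_not_coprime_le {q : ℕ} (hq : q ≠ 0) (n : ℕ) :
    ∑ m ∈ Ioc 0 n with ¬ m.Coprime q, Λ m / m ≤ log q := by
  have hterm : ∀ m ∈ {m ∈ Ioc 0 n | ¬ m.Coprime q}, Λ m / m
      ≤ ∑ p ∈ q.primeFactors, ∑ j ∈ Ioc 0 n, if p ^ j = m then log p * ((p : ℝ) ^ j)⁻¹ else 0 := by
    intro m hm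
    obtain ⟨hmn, hmq⟩ := mem_filter.mp hm
    have hnonneg : ∀ p ∈ q.primeFactors, ∀ j ∈ Ioc 0 n,
        0 ≤ if p ^ j = m then log p * ((p : ℝ) ^ j)⁻¹ else 0 := fun p _ j _ ↦ by
      have := log_natCast_nonneg p
      positivity
    by_cases hpp : IsPrimePow m
    · obtain ⟨p, j, hp, hj, rfl⟩ := (isPrimePow_nat_iff _).mp hpp
      have hpq : p ∈ q.primeFactors := Nat.mem_primeFactors.mpr
        ⟨hp, by_contra fun h ↦ hmq (((hp.coprime_iff_not_dvd).mpr h).pow_left j), hq⟩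
      have hjn : j ∈ Ioc 0 n :=
        mem_Ioc.mpr ⟨hj, (Nat.lt_pow_self hp.one_lt).le.trans (mem_Ioc.mp hmn).2⟩
      refine le_trans ?_ (single_le_sum (fun p hp ↦ sum_nonneg (hnonneg p hp)) hpq)
      refine le_trans ?_ (single_le_sum (hnonneg p hpq) hjn)
      rw [ArithmeticFunction.vonMangoldt_apply_pow hj.ne',
        ArithmeticFunction.vonMangoldt_apply_prime hp, if_pos rfl, div_eq_mul_inv, Nat.cast_pow]
    · rw [ArithmeticFunction.vonMangoldt_eq_zero_iff.mpr hpp, zero_div]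
      exact sum_nonneg fun p hp ↦ sum_nonneg (hnonneg p hp)
  calc _ ≤ ∑ p ∈ q.primeFactors, ∑ j ∈ Ioc 0 n, log p * ((p : ℝ) ^ j)⁻¹ := by
        refine (sum_le_sum hterm).trans ?_
        rw [sum_comm]
        refine sum_le_sum fun p _ ↦ ?_
        rw [sum_comm]
        refine sum_le_sum fun j _ ↦ ?_
        have := log_natCast_nonneg p
        rw [sum_ite_eq]
        split_ifs
        · exact le_rfl
        · positivity
    _ ≤ ∑ p ∈ q.primeFactors, log p := by
        refine sum_le_sum fun p hp ↦ ?_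
        rw [← mul_sum]
        exact mul_le_of_le_one_right (log_natCast_nonneg p) (sum_Ioc_inv_pow_le_one
          (by exact_mod_cast (Nat.prime_of_mem_primeFactors hp).two_le) n)
    _ ≤ _ := sum_primeFactors_log_le hq

theorem div_le_card_dvd_add_mul {m q : ℕ} (hmq : m.Coprime q) (v n : ℕ) :
    n / m ≤ #{i ∈ range n | m ∣ v + q * i} := by
  rcases m.eq_zero_or_pos with rfl | hm
  · simp
  have : NeZero m := ⟨hm.ne'⟩
  set c : ZMod m := -v * (q : ZMod m)⁻¹ with hc
  have hqc : (v : ZMod m) + q * c = 0 := by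
    have hunit := ZMod.coe_mul_inv_eq_one q hmq.symm
    linear_combination (norm := (rw [hc]; ring)) (-(v : ZMod m)) * hunit
  rw [← card_range (n / m)]
  refine card_le_card_of_injOn (fun j ↦ c.val + m * j) (fun j hj ↦ ?_) fun i _ j _ hij ↦ ?_
  · have hjm : m * (j + 1) ≤ n :=
      (Nat.mul_le_mul_left m (mem_range.mp hj)).trans (Nat.mul_div_le n m)
    have hval := ZMod.val_lt c
    rw [mem_coe, mem_filter, mem_range, ← ZMod.natCast_eq_zero_iff]
    refine ⟨by lia, ?_⟩
    push_cast
    rw [ZMod.natCast_zmod_val, ZMod.natCast_self, zero_mul, add_zero, hqc]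
  · exact Nat.eq_of_mul_eq_mul_left hm (Nat.add_left_cancel hij)

/- A sieve in the style of Chebyshev: all `m ≤ n` prime to `q` divide about as many terms of the
progression as of `1, …, n`, so `∑ log (v + q i)` contains, besides `∑ Λ (v + q i)`, almost all of
`log n!`. -/
theorem sum_vonMangoldt_add_log_factorial_le {q : ℕ} (hq : q ≠ 0) {v n : ℕ} (hn : n < v) :
    ∑ i ∈ range n, Λ (v + q * i) + log n ! ≤ ∑ i ∈ range n, log (v + q * i : ℕ) + n * log q := by
  have hdivisors : ∀ i ∈ range n,
      Λ (v + q * i) + ∑ m ∈ Ioc 0 n with m.Coprime q, (if m ∣ v + q * i then Λ m else 0)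
        ≤ log (v + q * i : ℕ) := by
    intro i _
    have hnot : v + q * i ∉ {m ∈ Ioc 0 n | m.Coprime q ∧ m ∣ v + q * i} := by
      simp only [mem_filter, mem_Ioc]; lia
    rw [← ArithmeticFunction.vonMangoldt_sum, ← sum_filter, filter_filter, ← sum_insert hnot]
    refine sum_le_sum_of_subset_of_nonneg (fun m hm ↦ ?_) fun _ _ _ ↦ vonMangoldt_nonneg
    have hdvd : m ∣ v + q * i := by
      rcases mem_insert.mp hm with rfl | hm
      · exact dvd_rfl
      · exact (mem_filter.mp hm).2.2
    exact Nat.mem_divisors.mpr ⟨hdvd, by lia⟩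
  have hcount : ∀ m ∈ {m ∈ Ioc 0 n | m.Coprime q}, Λ m * (n / m : ℕ)
      ≤ ∑ i ∈ range n, if m ∣ v + q * i then Λ m else 0 := by
    intro m hm
    rw [← sum_filter, sum_const, nsmul_eq_mul, mul_comm]
    have := div_le_card_dvd_add_mul (mem_filter.mp hm).2 v n
    exact mul_le_mul_of_nonneg_right (by exact_mod_cast this) vonMangoldt_nonneg
  have hrest : ∑ m ∈ Ioc 0 n with ¬ m.Coprime q, Λ m * (n / m : ℕ) ≤ n * log q := by
    refine le_trans ?_ (mul_le_mul_of_nonneg_left (sum_vonMangoldt_div_not_coprime_le hq n)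
      n.cast_nonneg)
    rw [mul_sum]
    refine sum_le_sum fun m _ ↦ ?_
    rw [mul_div_left_comm]
    exact mul_le_mul_of_nonneg_left Nat.cast_div_le vonMangoldt_nonneg
  have hsplit := sum_filter_add_sum_filter_not (Ioc 0 n) (·.Coprime q) fun m ↦ Λ m * (n / m : ℕ)
  rw [sum_vonMangoldt_mul_div_eq_log_factorial] at hsplit
  have hsum := sum_le_sum hdivisors
  rw [sum_add_distrib, sum_comm] at hsum
  linarith [sum_le_sum hcount]

theorem sum_vonMangoldt_add_mul_le {q : ℕ} (hq : q ≠ 0) {v n : ℕ} (hn0 : n ≠ 0) (hn : n < v) :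
    ∑ i ∈ range n, Λ (v + q * i) ≤ n * (log q + 1 + log ((v + q * n : ℕ) / n)) := by
  have hn' : (0 : ℝ) < n := by exact_mod_cast Nat.pos_of_ne_zero hn0
  have hstirling : n * log n - n ≤ log n ! := by
    have := Stirling.le_log_factorial_stirling hn0
    have := log_natCast_nonneg n
    have : 0 ≤ log (2 * π) := log_nonneg (by linarith [pi_gt_three])
    linarith
  have hterms : ∑ i ∈ range n, log (v + q * i : ℕ) ≤ n * log (v + q * n : ℕ) := by
    rw [← nsmul_eq_mul, ← card_range n, ← sum_const, card_range]
    refine sum_le_sum fun i hi ↦ log_le_log (by exact_mod_cast (by lia)) ?_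
    exact_mod_cast Nat.add_le_add_left (Nat.mul_le_mul_left q (mem_range.mp hi).le) v
  rw [log_div (by exact_mod_cast (by lia)) hn'.ne']
  linarith [sum_vonMangoldt_add_log_factorial_le hq hn]

variable {q : ℕ} [NeZero q] (c : ZMod q)

theorem sum_Ioc_modEq_le {f : ℕ → ℝ} (hf : ∀ n, 0 ≤ f n) (A H : ℕ) : ∃ v ∈ Ioc A (A + q),
    ∑ n ∈ Ioc A (A + H) with ((n : ℕ) : ZMod q) = c, f n
      ≤ ∑ i ∈ range (H / q + 1), f (v + q * i) := by
  have hq := Nat.pos_of_neZero q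
  set v := A + 1 + (c - ((A + 1 : ℕ) : ZMod q)).val
  have hv : (v : ZMod q) = c := by
    rw [Nat.cast_add, ZMod.natCast_zmod_val]; ring
  have hval := ZMod.val_lt (c - ((A + 1 : ℕ) : ZMod q))
  refine ⟨v, mem_Ioc.mpr ⟨by lia, by lia⟩, ?_⟩
  have hinj : Set.InjOn (fun i ↦ v + q * i) (range (H / q + 1)) := fun i _ j _ hij ↦
    Nat.eq_of_mul_eq_mul_left hq (Nat.add_left_cancel hij)
  rw [← sum_image (f := f) hinj]
  refine sum_le_sum_of_subset_of_nonneg (fun n hn ↦ ?_) fun n _ _ ↦ hf n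
  obtain ⟨hmem, hnc⟩ := mem_filter.mp hn
  obtain ⟨hAn, hnH⟩ := mem_Ioc.mp hmem
  have hvn : v ≤ n := by
    by_contra! hlt
    have hmod : n ≡ v [MOD q] := (ZMod.natCast_eq_natCast_iff _ _ _).mp (hnc.trans hv.symm)
    exact hlt.ne (Nat.ModEq.eq_of_abs_lt hmod (by rw [abs_lt]; lia))
  obtain ⟨i, hi⟩ := (Nat.modEq_iff_dvd' hvn).mp
    ((ZMod.natCast_eq_natCast_iff _ _ _).mp (hv.trans hnc.symm))
  refine mem_image.mpr ⟨i, mem_range.mpr (Nat.lt_succ_of_le ?_), by lia⟩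
  rw [Nat.le_div_iff_mul_le hq, mul_comm]
  lia

theorem sum_vonMangoldt_modEq_le {A H : ℕ} (hHA : H / q < A) (hH : H ≠ 0) :
    ∑ n ∈ Ioc A (A + H) with ((n : ℕ) : ZMod q) = c, Λ n
      ≤ ((H : ℝ) / q + 1) * (2 * log q + 1 + log ((A + H + 2 * q : ℕ) / H)) := by
  obtain ⟨v, hv, hsum⟩ := sum_Ioc_modEq_le c (fun _ ↦ vonMangoldt_nonneg) A H
  obtain ⟨hAv, hvA⟩ := mem_Ioc.mp hv
  have hq : (0 : ℝ) < q := by exact_mod_cast Nat.pos_of_neZero q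
  have hH' : (0 : ℝ) < H := by exact_mod_cast Nat.pos_of_ne_zero hH
  have hn : ((H / q + 1 : ℕ) : ℝ) ≤ H / q + 1 := by
    push_cast; gcongr; exact Nat.cast_div_le
  have hfloor : H < q * (H / q + 1) := Nat.lt_mul_div_succ H (Nat.pos_of_neZero q)
  have hlast : v + q * (H / q + 1) ≤ A + H + 2 * q := by
    have := Nat.mul_div_le H q
    lia
  have hratio : ((v + q * (H / q + 1) : ℕ) : ℝ) / (H / q + 1 : ℕ)
      ≤ q * ((A + H + 2 * q : ℕ) / H) := by
    rw [div_le_iff₀ (by positivity), mul_div_assoc', div_mul_eq_mul_div, le_div_iff₀ hH']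
    exact_mod_cast (Nat.mul_le_mul hlast hfloor.le).trans_eq (by ring)
  have hlog : log (((v + q * (H / q + 1) : ℕ) : ℝ) / (H / q + 1 : ℕ))
      ≤ log q + log ((A + H + 2 * q : ℕ) / H) := by
    rw [← log_mul hq.ne' (by positivity)]
    refine log_le_log (div_pos ?_ (by positivity)) hratio
    exact_mod_cast (by lia)
  have hone : 0 ≤ log ((A + H + 2 * q : ℕ) / H) := log_nonneg <| by
    rw [one_le_div hH']
    exact_mod_cast (by lia)
  have := log_natCast_nonneg q
  calc _ ≤ (H / q + 1 : ℕ) * (log q + 1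
        + log ((v + q * (H / q + 1) : ℕ) / (H / q + 1 : ℕ))) :=
        hsum.trans (sum_vonMangoldt_add_mul_le (NeZero.ne q) (by lia) (by lia))
    _ ≤ (H / q + 1 : ℕ) * (2 * log q + 1 + log ((A + H + 2 * q : ℕ) / H)) := by
        gcongr ?_ * ?_
        linarith
    _ ≤ _ := by gcongr

theorem sum_vonMangoldt_modEq_le_of_short {A H : ℕ} (hq : 2 ≤ q) (hqH : q ≤ H) (hHA : H ≤ A)
    (hAH : A ≤ 2 * q * H) :
    ∑ n ∈ Ioc A (A + H) with ((n : ℕ) : ZMod q) = c, Λ n ≤ 6 * (H / q) * (1 + log q) := by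
  have hq0 : (0 : ℝ) < q := by positivity
  have hH0 : (0 : ℝ) < H := by exact_mod_cast (by lia)
  have hone : 1 ≤ (H : ℝ) / q := (one_le_div hq0).mpr (by exact_mod_cast hqH)
  have hratio : ((A + H + 2 * q : ℕ) : ℝ) / H ≤ 4 * q := by
    rw [div_le_iff₀ hH0]
    exact_mod_cast show A + H + 2 * q ≤ 4 * q * H by nlinarith
  have hlog : log ((A + H + 2 * q : ℕ) / H) ≤ 2 + log q := by
    have hlog2 := log_two_lt_d9
    rw [show 2 + log q = log q + 2 by ring]
    calc _ ≤ log (2 ^ 2 * q) := log_le_log (by positivity) (hratio.trans_eq (by norm_num))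
      _ ≤ _ := by
        rw [log_mul (by norm_num) hq0.ne', log_pow]
        push_cast
        linarith
  have hdiv : H / q < A := (Nat.div_lt_self (by lia) hq).trans_le hHA
  calc _ ≤ ((H : ℝ) / q + 1) * (2 * log q + 1 + log ((A + H + 2 * q : ℕ) / H)) :=
        sum_vonMangoldt_modEq_le c hdiv (by lia)
    _ ≤ (H / q + 1) * (2 * log q + 1 + (2 + log q)) := by gcongr
    _ ≤ (H / q + H / q) * (2 * log q + 1 + (2 + log q)) := by gcongr
    _ = _ := by ring

theorem sum_vonMangoldt_modEq_le_of_le {y : ℕ} (hq : 2 ≤ q) (hqy : q ≤ y) :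
    ∑ n ∈ Ioc 0 y with ((n : ℕ) : ZMod q) = c, Λ n ≤ 18 * (y / q) * (1 + log q) := by
  have hq0 : (0 : ℝ) < q := by positivity
  have hy0 : (0 : ℝ) < y := by exact_mod_cast (by lia)
  have hone : 1 ≤ (y : ℝ) / q := (one_le_div hq0).mpr (by exact_mod_cast hqy)
  set A := y / q + 1
  have hA : (A : ℝ) ≤ y / q + 1 := by
    rw [Nat.cast_succ]
    gcongr
    exact Nat.cast_div_le
  have hAy : A ≤ y := Nat.div_lt_self (by lia) hq
  have hlog : log ((A + y + 2 * q : ℕ) / y) ≤ 2 := by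
    have hratio : ((A + y + 2 * q : ℕ) : ℝ) / y ≤ 2 ^ 2 := by
      rw [div_le_iff₀ hy0]
      exact_mod_cast (by lia)
    refine (log_le_log (by positivity) hratio).trans ?_
    rw [log_pow]
    push_cast
    linarith [log_two_lt_d9]
  have hlogq := log_natCast_nonneg q
  have hsplit : ∑ n ∈ Ioc 0 y with ((n : ℕ) : ZMod q) = c, Λ n
      ≤ ∑ n ∈ Ioc 0 A, Λ n + ∑ n ∈ Ioc A (A + y) with ((n : ℕ) : ZMod q) = c, Λ n := by
    calc _ ≤ ∑ n ∈ Ioc 0 (A + y) with ((n : ℕ) : ZMod q) = c, Λ n :=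
          sum_le_sum_of_subset_of_nonneg
            (filter_subset_filter _ (Ioc_subset_Ioc_right (Nat.le_add_left y A)))
            fun _ _ _ ↦ vonMangoldt_nonneg
      _ = ∑ n ∈ Ioc 0 A with ((n : ℕ) : ZMod q) = c, Λ n
          + ∑ n ∈ Ioc A (A + y) with ((n : ℕ) : ZMod q) = c, Λ n := by
        simp_rw [sum_filter]
        exact (sum_Ioc_consecutive _ (Nat.zero_le A) (Nat.le_add_right A y)).symm
      _ ≤ _ := by
        refine add_le_add_left (sum_le_sum_of_subset_of_nonneg ?_ fun _ _ _ ↦ vonMangoldt_nonneg) _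
        exact filter_subset _ _
  calc _ ≤ 6 * (A : ℝ) + (y / q + 1) * (2 * log q + 1 + log ((A + y + 2 * q : ℕ) / y)) :=
        hsplit.trans (add_le_add (sum_vonMangoldt_le A)
          (sum_vonMangoldt_modEq_le c (Nat.lt_succ_self _) (by lia)))
    _ ≤ 6 * (y / q + 1) + (y / q + 1) * (2 * log q + 1 + 2) := by gcongr
    _ ≤ 6 * (y / q + y / q) + (y / q + y / q) * (2 * log q + 1 + 2) := by gcongr
    _ ≤ _ := by nlinarith

theorem sum_vonMangoldt_Ioc_le_of_short {A H : ℕ} (hq : 2 ≤ q) (hqH : q ≤ H) (hHA : H ≤ A)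
    (hAH : A ≤ 2 * q * H) : ∑ n ∈ Ioc A (A + H), Λ n ≤ 6 * H * (1 + log q) := by
  rw [← sum_fiberwise (Ioc A (A + H)) fun n : ℕ ↦ (n : ZMod q)]
  calc _ ≤ ∑ c : ZMod q, 6 * ((H : ℝ) / q) * (1 + log q) :=
        sum_le_sum fun c _ ↦ sum_vonMangoldt_modEq_le_of_short c hq hqH hHA hAH
    _ = _ := by
        rw [sum_const, card_univ, ZMod.card, nsmul_eq_mul]
        field_simp

end ChebyshevArithmeticProgression

section BilinearRational

open ArithmeticFunction (vonMangoldt_nonneg)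
open ZMod (stdAddChar)

variable {q : ℕ} [NeZero q]

theorem fourierChar_intCast_div (j : ℤ) : (𝐞 (j / q : ℝ) : ℂ) = stdAddChar (j : ZMod q) := by
  rw [ZMod.stdAddChar_coe, Real.fourierChar_apply]
  congr 1
  push_cast
  ring

theorem sum_norm_sq_sum_mul_stdAddChar {r : ZMod q} (hr : IsUnit r) (g : ZMod q → ℂ) :
    ∑ u, ‖∑ v, g v * stdAddChar (r * u * v)‖ ^ 2 = q * ∑ v, ‖g v‖ ^ 2 := by
  have hexpand : ∀ u, (‖∑ v, g v * stdAddChar (r * u * v)‖ : ℂ) ^ 2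
      = ∑ v, ∑ v', g v * (starRingEnd ℂ) (g v') * stdAddChar (u * (r * (v - v'))) := by
    intro u
    rw [← Complex.mul_conj', map_sum, sum_mul_sum]
    refine sum_congr rfl fun v _ ↦ sum_congr rfl fun v' _ ↦ ?_
    rw [map_mul (starRingEnd ℂ), ← AddChar.map_neg_eq_conj,
      show u * (r * (v - v')) = r * u * v + -(r * u * v') by ring, AddChar.map_add_eq_mul]
    ring
  have horthogonal : ∀ v v', ∑ u, g v * (starRingEnd ℂ) (g v') * stdAddChar (u * (r * (v - v')))
      = if v' = v then (q : ℂ) * ‖g v‖ ^ 2 else 0 := by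
    intro v v'
    rw [← mul_sum, AddChar.sum_mulShift _ (ZMod.isPrimitive_stdAddChar q), ZMod.card]
    rcases eq_or_ne v v' with rfl | hne
    · rw [sub_self, mul_zero, if_pos rfl, if_pos rfl, Complex.mul_conj', mul_comm]
    · have hdiff : r * (v - v') ≠ 0 := mt hr.mul_right_eq_zero.mp (sub_ne_zero.mpr hne)
      rw [if_neg hdiff, if_neg hne.symm, Nat.cast_zero, mul_zero]
  have hcomplex : ∑ u, (‖∑ v, g v * stdAddChar (r * u * v)‖ : ℂ) ^ 2
      = q * ∑ v, (‖g v‖ : ℂ) ^ 2 := by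
    rw [sum_congr rfl fun u _ ↦ hexpand u, sum_comm, mul_sum]
    refine sum_congr rfl fun v _ ↦ ?_
    rw [sum_comm, sum_congr rfl fun v' _ ↦ horthogonal v v', sum_ite_eq', if_pos (mem_univ v)]
  exact_mod_cast hcomplex

theorem norm_sum_sum_mul_stdAddChar_sq_le {r : ZMod q} (hr : IsUnit r) (f g : ZMod q → ℂ) :
    ‖∑ u, f u * ∑ v, g v * stdAddChar (r * u * v)‖ ^ 2
      ≤ q * (∑ u, ‖f u‖ ^ 2) * ∑ v, ‖g v‖ ^ 2 := by
  calc _ ≤ (∑ u, ‖f u‖ * ‖∑ v, g v * stdAddChar (r * u * v)‖) ^ 2 := by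
        gcongr
        exact (norm_sum_le _ _).trans_eq (sum_congr rfl fun _ _ ↦ norm_mul _ _)
    _ ≤ (∑ u, ‖f u‖ ^ 2) * ∑ u, ‖∑ v, g v * stdAddChar (r * u * v)‖ ^ 2 :=
        sum_mul_sq_le_sq_mul_sq _ _ _
    _ = _ := by rw [sum_norm_sq_sum_mul_stdAddChar hr]; ring

theorem sum_sum_mul_fourierChar_eq_sum_sum_zmod (f g : ℕ → ℂ) (s t : Finset ℕ) (r : ℤ) :
    ∑ a ∈ s, f a * ∑ b ∈ t, g b * 𝐞 ((a * b : ℕ) * (r / q : ℝ))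
      = ∑ u : ZMod q, (∑ a ∈ s with ((a : ℕ) : ZMod q) = u, f a)
          * ∑ v : ZMod q, (∑ b ∈ t with ((b : ℕ) : ZMod q) = v, g b)
            * stdAddChar ((r : ZMod q) * u * v) := by
  have hphase (a b : ℕ) : (𝐞 ((a * b : ℕ) * (r / q : ℝ)) : ℂ)
      = stdAddChar ((r : ZMod q) * (a : ZMod q) * (b : ZMod q)) := by
    rw [show ((a * b : ℕ) * (r / q : ℝ)) = ((r * a * b : ℤ) / q : ℝ) by push_cast; ring,
      fourierChar_intCast_div]
    push_cast
    rfl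
  simp_rw [hphase]
  rw [← sum_fiberwise s fun a : ℕ ↦ (a : ZMod q)]
  refine sum_congr rfl fun u _ ↦ ?_
  rw [sum_mul]
  refine sum_congr rfl fun a ha ↦ ?_
  rw [(mem_filter.mp ha).2, ← sum_fiberwise t fun b : ℕ ↦ (b : ZMod q)]
  congr 1
  refine sum_congr rfl fun v _ ↦ ?_
  rw [sum_mul]
  exact sum_congr rfl fun b hb ↦ by rw [(mem_filter.mp hb).2]

theorem norm_sum_sum_mul_fourierChar_le {r : ℤ} (hrq : IsCoprime r q) {f g : ℕ → ℝ}
    (hf : ∀ n, 0 ≤ f n) (hg : ∀ n, 0 ≤ g n) {s t : Finset ℕ} {U V : ℝ}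
    (hU : ∀ c : ZMod q, ∑ n ∈ s with ((n : ℕ) : ZMod q) = c, f n ≤ U)
    (hV : ∀ c : ZMod q, ∑ n ∈ t with ((n : ℕ) : ZMod q) = c, g n ≤ V) :
    ‖∑ a ∈ s, (f a : ℂ) * ∑ b ∈ t, (g b : ℂ) * 𝐞 ((a * b : ℕ) * (r / q : ℝ))‖
      ≤ q * √q * U * V := by
  have hFU (u : ZMod q) : ‖∑ a ∈ s with ((a : ℕ) : ZMod q) = u, (f a : ℂ)‖ ≤ U :=
    (norm_sum_le_of_le _ fun n _ ↦ (Complex.norm_of_nonneg (hf n)).le).trans (hU u)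
  have hGV (v : ZMod q) : ‖∑ b ∈ t with ((b : ℕ) : ZMod q) = v, (g b : ℂ)‖ ≤ V :=
    (norm_sum_le_of_le _ fun n _ ↦ (Complex.norm_of_nonneg (hg n)).le).trans (hV v)
  have hU0 : 0 ≤ U := (norm_nonneg _).trans (hFU 0)
  have hV0 : 0 ≤ V := (norm_nonneg _).trans (hGV 0)
  rw [sum_sum_mul_fourierChar_eq_sum_sum_zmod]
  refine le_of_sq_le_sq ?_ (by positivity)
  calc _ ≤ q * (∑ u : ZMod q, ‖∑ a ∈ s with ((a : ℕ) : ZMod q) = u, (f a : ℂ)‖ ^ 2)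
          * ∑ v : ZMod q, ‖∑ b ∈ t with ((b : ℕ) : ZMod q) = v, (g b : ℂ)‖ ^ 2 :=
        norm_sum_sum_mul_stdAddChar_sq_le (isUnit_intCast_zmod hrq) _ _
    _ ≤ q * (∑ _u : ZMod q, U ^ 2) * ∑ _v : ZMod q, V ^ 2 := by
        gcongr with u _ v _
        exacts [hFU u, hGV v]
    _ = _ := by
        rw [sum_const, sum_const, card_univ, ZMod.card, nsmul_eq_mul, nsmul_eq_mul]
        linear_combination (-(q : ℝ) ^ 2 * U ^ 2 * V ^ 2) * sq_sqrt q.cast_nonneg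

theorem div_le_div_add_div {N A a : ℕ} (hAa : A < a) (hq : 2 * q ≤ N / (A + A / q)) :
    N / a ≤ N / (A + A / q) + 2 * (N / (A + A / q) / q) := by
  have hq0 := Nat.pos_of_neZero q
  have hA : 0 < A + A / q := by
    rw [Nat.pos_iff_ne_zero]
    intro h
    rw [h, Nat.div_zero] at hq
    lia
  set B := N / (A + A / q)
  have hN : N < (A + A / q) * (B + 1) := Nat.lt_mul_div_succ N hA
  have hBq : B + 1 ≤ q * (2 * (B / q)) := by
    have := Nat.lt_mul_div_succ B hq0
    lia
  have hshort : (B + 1) * (A / q) ≤ 2 * (B / q) * A := by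
    refine Nat.le_of_mul_le_mul_left ?_ hq0
    calc q * ((B + 1) * (A / q)) = (B + 1) * (q * (A / q)) := by ring
      _ ≤ q * (2 * (B / q)) * A := Nat.mul_le_mul hBq (Nat.mul_div_le A q)
      _ = q * (2 * (B / q) * A) := by ring
  refine Nat.le_of_lt_succ ((Nat.div_lt_iff_lt_mul (by lia)).mpr ?_)
  calc N < (B + 2 * (B / q) + 1) * A := by linarith
    _ ≤ (B + 2 * (B / q) + 1) * a := Nat.mul_le_mul_left _ hAa.le

theorem le_two_mul_mul_div {A : ℕ} (hqA : q ≤ A) : A ≤ 2 * q * (A / q) := by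
  have hq := Nat.pos_of_neZero q
  have hone : q * 1 ≤ q * (A / q) := Nat.mul_le_mul_left q ((Nat.one_le_div_iff hq).mpr hqA)
  have hfloor : A < q * (A / q + 1) := Nat.lt_mul_div_succ A hq
  lia

/- The short block `a ∈ (A, A + A / q]` makes the range of `b` almost independent of `a`, at a cost
controlled by the Chebyshev bound in short intervals. -/
theorem norm_sum_block_sub_le (hq : 2 ≤ q) {N A : ℕ} (hA : q ^ 2 ≤ A)
    (hB : q ^ 2 ≤ N / (A + A / q)) {ω : ℕ → ℂ} (hω : ∀ n, ‖ω n‖ ≤ 1) :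
    ‖∑ a ∈ Ioc A (A + A / q), (Λ a : ℂ) * ∑ b ∈ Ioc 0 (N / a), (Λ b : ℂ) * ω (a * b)
        - ∑ a ∈ Ioc A (A + A / q), (Λ a : ℂ) * ∑ b ∈ Ioc 0 (N / (A + A / q)), (Λ b : ℂ) * ω (a * b)‖
      ≤ 72 * ((A / q : ℕ) * (N / (A + A / q) : ℕ)) * (1 + log q) ^ 2 / q := by
  set H := A / q
  set B := N / (A + H)
  have hqH : q ≤ H := (Nat.le_div_iff_mul_le (by lia)).mpr (by nlinarith)
  have hqB : q ≤ B / q := (Nat.le_div_iff_mul_le (by lia)).mpr (by nlinarith)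
  have hHA : H ≤ A := Nat.div_le_self A q
  have hAH : A ≤ 2 * q * H := le_two_mul_mul_div (by nlinarith)
  have hBH : B ≤ 2 * q * (2 * (B / q)) :=
    (le_two_mul_mul_div (by nlinarith)).trans (Nat.mul_le_mul_left _ (by lia))
  have hHB : 2 * (B / q) ≤ B := by
    have := Nat.mul_div_le B q
    nlinarith
  have hB2 : 2 * q ≤ B := by nlinarith
  have hinner : ∀ a ∈ Ioc A (A + H), ‖∑ b ∈ Ioc 0 (N / a), (Λ b : ℂ) * ω (a * b)
      - ∑ b ∈ Ioc 0 B, (Λ b : ℂ) * ω (a * b)‖ ≤ 6 * (2 * (B / q) : ℕ) * (1 + log q) := by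
    intro a ha
    obtain ⟨hAa, haH⟩ := mem_Ioc.mp ha
    have hBa : B ≤ N / a := Nat.div_le_div_left haH (by lia)
    have haB : N / a ≤ B + 2 * (B / q) := div_le_div_add_div hAa hB2
    rw [← sum_Ioc_consecutive _ (Nat.zero_le B) hBa, add_sub_cancel_left]
    refine (norm_sum_le_of_le _ fun b _ ↦ ?_).trans ((sum_le_sum_of_subset_of_nonneg
      (Ioc_subset_Ioc_right haB) fun _ _ _ ↦ vonMangoldt_nonneg).trans
        (sum_vonMangoldt_Ioc_le_of_short hq (by lia) hHB hBH))
    rw [norm_mul, Complex.norm_of_nonneg vonMangoldt_nonneg]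
    exact mul_le_of_le_one_right vonMangoldt_nonneg (hω _)
  calc _ ≤ ∑ a ∈ Ioc A (A + H), Λ a * (6 * (2 * (B / q) : ℕ) * (1 + log q)) := by
        rw [← sum_sub_distrib]
        refine norm_sum_le_of_le _ fun a ha ↦ ?_
        rw [← mul_sub, norm_mul, Complex.norm_of_nonneg vonMangoldt_nonneg]
        exact mul_le_mul_of_nonneg_left (hinner a ha) vonMangoldt_nonneg
    _ ≤ 6 * H * (1 + log q) * (6 * (2 * (B / q)) * (1 + log q)) := by
        rw [← sum_mul]
        push_cast
        gcongr
        · exact sum_vonMangoldt_Ioc_le_of_short hq hqH hHA hAH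
        · exact Nat.cast_div_le
    _ = _ := by ring

theorem norm_sum_block_vonMangoldt_le {r : ℤ} (hrq : IsCoprime r q) (hq : 2 ≤ q) {N A : ℕ}
    (hA : q ^ 2 ≤ A) (hB : q ^ 2 ≤ N / (A + A / q)) :
    ‖∑ a ∈ Ioc A (A + A / q), (Λ a : ℂ) * ∑ b ∈ Ioc 0 (N / a), (Λ b : ℂ)
        * 𝐞 ((a * b : ℕ) * (r / q : ℝ))‖
      ≤ ∑ a ∈ Ioc A (A + A / q), 180 * (N * (1 + log q) ^ 2 / √q) * (a : ℝ)⁻¹ := by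
  have hq0 : (0 : ℝ) < q := by positivity
  have hqA : q ≤ A / q := (Nat.le_div_iff_mul_le (by lia)).mpr (by nlinarith)
  have hAH : A ≤ 2 * q * (A / q) := le_two_mul_mul_div (by nlinarith)
  have hsqrt : √q * √q = q := mul_self_sqrt hq0.le
  have herror := norm_sum_block_sub_le hq hA hB (ω := fun n ↦ (𝐞 (n * (r / q : ℝ)) : ℂ))
    fun n ↦ (Circle.norm_coe _).le
  have hmain := norm_sum_sum_mul_fourierChar_le hrq (fun _ ↦ vonMangoldt_nonneg)
    (fun _ ↦ vonMangoldt_nonneg)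
    (fun c ↦ sum_vonMangoldt_modEq_le_of_short c hq hqA (Nat.div_le_self A q) hAH)
    fun c ↦ sum_vonMangoldt_modEq_le_of_le (y := N / (A + A / q)) c hq (by nlinarith)
  have hHB : ((A / q : ℕ) * (N / (A + A / q) : ℕ) : ℝ)
      ≤ N * ∑ a ∈ Ioc A (A + A / q), (a : ℝ)⁻¹ := by
    have hcard : ((A / q : ℕ) : ℝ) * ((A + A / q : ℕ) : ℝ)⁻¹
        ≤ ∑ a ∈ Ioc A (A + A / q), (a : ℝ)⁻¹ := by
      calc _ = ∑ _a ∈ Ioc A (A + A / q), ((A + A / q : ℕ) : ℝ)⁻¹ := by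
            rw [sum_const, Nat.card_Ioc, Nat.add_sub_cancel_left, nsmul_eq_mul]
        _ ≤ _ := sum_le_sum fun a ha ↦ by
          have := mem_Ioc.mp ha
          exact inv_anti₀ (by exact_mod_cast (by lia)) (by exact_mod_cast this.2)
    calc _ ≤ ((A / q : ℕ) : ℝ) * (N / (A + A / q : ℕ)) := by gcongr; exact Nat.cast_div_le
      _ = N * (((A / q : ℕ) : ℝ) * ((A + A / q : ℕ) : ℝ)⁻¹) := by ring
      _ ≤ _ := by gcongr
  rw [← mul_sum]
  set HB := ((A / q : ℕ) * (N / (A + A / q) : ℕ) : ℝ)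
  calc _ ≤ 72 * HB * (1 + log q) ^ 2 / q + 108 * HB * (1 + log q) ^ 2 / √q := by
        refine (norm_le_norm_sub_add _ _).trans (add_le_add herror (hmain.trans_eq ?_))
        field_simp
        linear_combination 108 * HB * hsqrt
    _ ≤ 72 * HB * (1 + log q) ^ 2 / √q + 108 * HB * (1 + log q) ^ 2 / √q := by
        gcongr
        exact sqrt_le_iff.mpr ⟨hq0.le, le_self_pow₀ (by exact_mod_cast (by lia)) two_ne_zero⟩
    _ = 180 * ((1 + log q) ^ 2 / √q) * HB := by ring
    _ ≤ 180 * ((1 + log q) ^ 2 / √q) * (N * ∑ a ∈ Ioc A (A + A / q), (a : ℝ)⁻¹) := by gcongr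
    _ = _ := by ring

end BilinearRational

section TypeTwoRational

open ArithmeticFunction (vonMangoldt_nonneg)

variable {q : ℕ} [NeZero q]

theorem exists_norm_sum_Ioc_le_sum_Ioc {f : ℕ → ℂ} {g : ℕ → ℝ} {Z₀ Z₁ : ℕ} (hq : q ≤ Z₀)
    (hZ : Z₀ ≤ Z₁)
    (hfg : ∀ A, Z₀ ≤ A → A < Z₁ → ‖∑ n ∈ Ioc A (A + A / q), f n‖ ≤ ∑ n ∈ Ioc A (A + A / q), g n) :
    ∃ Z ∈ Icc Z₁ (2 * Z₁), ‖∑ n ∈ Ioc Z₀ Z, f n‖ ≤ ∑ n ∈ Ioc Z₀ Z, g n := by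
  induction Z₁, hZ using Nat.le_induction with
  | base => exact ⟨Z₀, mem_Icc.mpr ⟨le_rfl, by lia⟩, by simp⟩
  | succ Z₁ hZ ih =>
    obtain ⟨Z, hmem, hsum⟩ := ih fun A hA hAZ ↦ hfg A hA (by lia)
    obtain ⟨hZ₁Z, hZZ₁⟩ := mem_Icc.mp hmem
    rcases hZ₁Z.eq_or_lt with rfl | hlt
    · have hstep : 1 ≤ Z₁ / q := (Nat.one_le_div_iff (Nat.pos_of_neZero q)).mpr (by lia)
      have hZq := Nat.div_le_self Z₁ q
      refine ⟨Z₁ + Z₁ / q, mem_Icc.mpr ⟨by lia, by lia⟩, ?_⟩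
      rw [← sum_Ioc_consecutive _ hZ (Nat.le_add_right Z₁ _),
        ← sum_Ioc_consecutive g hZ (Nat.le_add_right Z₁ _)]
      exact (norm_add_le _ _).trans (add_le_add hsum (hfg Z₁ hZ (Nat.lt_succ_self _)))
    · exact ⟨Z, mem_Icc.mpr ⟨hlt, by lia⟩, hsum⟩

theorem norm_sum_vonMangoldt_mul_le_sum {ω : ℕ → ℂ} (hω : ∀ n, ‖ω n‖ ≤ 1) (s : Finset ℕ)
    (t : ℕ → Finset ℕ) : ‖∑ a ∈ s, (Λ a : ℂ) * ∑ b ∈ t a, (Λ b : ℂ) * ω (a * b)‖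
      ≤ ∑ a ∈ s, Λ a * ∑ b ∈ t a, Λ b := by
  refine norm_sum_le_of_le _ fun a _ ↦ ?_
  rw [norm_mul, Complex.norm_of_nonneg vonMangoldt_nonneg]
  refine mul_le_mul_of_nonneg_left (norm_sum_le_of_le _ fun b _ ↦ ?_) vonMangoldt_nonneg
  rw [norm_mul, Complex.norm_of_nonneg vonMangoldt_nonneg]
  exact mul_le_of_le_one_right vonMangoldt_nonneg (hω _)

theorem sum_Ioc_vonMangoldt_mul_sum_le {N Z : ℕ} (hZ : Z ≠ 0) (hZN : Z ≤ N) :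
    ∑ a ∈ Ioc Z N, Λ a * ∑ b ∈ Ioc 0 (N / a), Λ b ≤ 6 * N * (log (N / Z : ℕ) + 6) := by
  simp_rw [mul_sum]
  rw [sum_Ioc_sum_Ioc_div_comm _ hZ]
  refine le_trans (sum_le_sum fun b _ ↦ ?_)
    (sum_vonMangoldt_mul_sum_le (Nat.div_pos hZN (Nat.pos_of_ne_zero hZ)).ne')
  simp_rw [mul_comm _ (Λ b)]
  rw [← mul_sum]
  exact mul_le_mul_of_nonneg_left (sum_le_sum_of_subset_of_nonneg
    (Ioc_subset_Ioc_left (Nat.zero_le Z)) fun _ _ _ ↦ vonMangoldt_nonneg) vonMangoldt_nonneg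

theorem exists_norm_sum_Ioc_vonMangoldt_rational_le {r : ℤ} (hrq : IsCoprime r q) (hq : 2 ≤ q)
    {N : ℕ} (hN : 2 * q ^ 4 ≤ N) :
    ∃ Z ∈ Icc (q ^ 2) N, N / Z ≤ 4 * q ^ 2 ∧
      ‖∑ a ∈ Ioc (q ^ 2) Z, (Λ a : ℂ) * ∑ b ∈ Ioc 0 (N / a), (Λ b : ℂ)
          * 𝐞 ((a * b : ℕ) * (r / q : ℝ))‖
        ≤ 180 * (N * (1 + log q) ^ 2 / √q) * (1 + log N) := by
  have hq2 : 0 < q ^ 2 := by positivity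
  have hqZ : q ^ 2 ≤ N / (2 * q ^ 2) := (Nat.le_div_iff_mul_le (by lia)).mpr (by linarith)
  have hZN : N / (2 * q ^ 2) * (2 * q ^ 2) ≤ N := Nat.div_mul_le_self _ _
  have hNZ : N < 2 * q ^ 2 * (N / (2 * q ^ 2) + 1) := Nat.lt_mul_div_succ N (by lia)
  set Z₁ := N / (2 * q ^ 2)
  have hblock : ∀ A, q ^ 2 ≤ A → A < Z₁ → q ^ 2 ≤ N / (A + A / q) := by
    intro A hA hAZ
    have := Nat.div_le_self A q
    exact (Nat.le_div_iff_mul_le (by lia)).mpr (by nlinarith)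
  obtain ⟨Z, hmem, hmiddle⟩ := exists_norm_sum_Ioc_le_sum_Ioc (Nat.le_self_pow two_ne_zero q) hqZ
    fun A hA hAZ ↦ norm_sum_block_vonMangoldt_le hrq hq hA (hblock A hA hAZ)
  obtain ⟨hZ₁Z, hZZ₁⟩ := mem_Icc.mp hmem
  have hZN' : Z ≤ N := by nlinarith
  refine ⟨Z, mem_Icc.mpr ⟨hqZ.trans hZ₁Z, hZN'⟩, ?_, hmiddle.trans ?_⟩
  · exact (Nat.div_le_div_left hZ₁Z (by lia)).trans (Nat.div_le_of_le_mul (by nlinarith))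
  · rw [← mul_sum]
    refine mul_le_mul_of_nonneg_left (le_trans ?_ (sum_Ioc_inv_le N)) (by positivity)
    exact sum_le_sum_of_subset_of_nonneg (Ioc_subset_Ioc (Nat.zero_le _) hZN')
      fun _ _ _ ↦ by positivity

theorem norm_sum_sum_vonMangoldt_rational_le {r : ℤ} (hrq : IsCoprime r q) (hq : 2 ≤ q) {N : ℕ}
    (hN : 2 * q ^ 4 ≤ N) :
    ‖∑ a ∈ Ioc 0 N, (Λ a : ℂ) * ∑ b ∈ Ioc 0 (N / a), (Λ b : ℂ) * 𝐞 ((a * b : ℕ) * (r / q : ℝ))‖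
      ≤ 180 * (N * (1 + log q) ^ 2 / √q) * (1 + log N) + 84 * N * (1 + log q) := by
  have hq2 : q ^ 2 ≠ 0 := pow_ne_zero 2 (NeZero.ne q)
  obtain ⟨Z, hmem, hratio, hmiddle⟩ := exists_norm_sum_Ioc_vonMangoldt_rational_le hrq hq hN
  obtain ⟨hqZ, hZN⟩ := mem_Icc.mp hmem
  have hlogZ : log (N / Z : ℕ) ≤ 2 + 2 * log q := by
    have hpos : 0 < N / Z := Nat.div_pos hZN (by lia)
    have hq0 : (q : ℝ) ≠ 0 := NeZero.ne _
    calc log (N / Z : ℕ) ≤ log ((2 * q) ^ 2) :=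
          log_le_log (by exact_mod_cast hpos) (by exact_mod_cast hratio.trans_eq (by ring))
      _ ≤ _ := by
        rw [log_pow, log_mul two_ne_zero hq0]
        push_cast
        linarith [log_two_lt_d9]
  have hω : ∀ n : ℕ, ‖(𝐞 (n * (r / q : ℝ)) : ℂ)‖ ≤ 1 := fun n ↦ (Circle.norm_coe _).le
  have hhead := (norm_sum_vonMangoldt_mul_le_sum hω (Ioc 0 (q ^ 2)) fun a ↦ Ioc 0 (N / a)).trans
    (sum_vonMangoldt_mul_sum_le hq2)
  have htail := (norm_sum_vonMangoldt_mul_le_sum hω (Ioc Z N) fun a ↦ Ioc 0 (N / a)).trans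
    (sum_Ioc_vonMangoldt_mul_sum_le (by lia) hZN)
  rw [← sum_Ioc_consecutive _ (Nat.zero_le _) hZN, ← sum_Ioc_consecutive _ (Nat.zero_le _) hqZ]
  refine norm_add₃_le.trans ((add_le_add (add_le_add hhead hmiddle) htail).trans ?_)
  have : 0 ≤ N * log q := by positivity
  rw [Nat.cast_pow, log_pow, Nat.cast_two]
  nlinarith

end TypeTwoRational

section MoebiusMultiples

open scoped ArithmeticFunction.Moebius
open ArithmeticFunction (vonMangoldt_nonneg)

theorem sum_Ioc_filter_dvd {M : Type*} [AddCommMonoid M] {q : ℕ} (hq : q ≠ 0) (f : ℕ → M)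
    (N : ℕ) : ∑ n ∈ Ioc 0 N with q ∣ n, f n = ∑ e ∈ Ioc 0 (N / q), f (q * e) := by
  have hq0 := Nat.pos_of_ne_zero hq
  refine (sum_bij (fun e _ ↦ q * e) (fun e he ↦ ?_) (fun a _ b _ h ↦ ?_) (fun n hn ↦ ?_)
    fun _ _ ↦ rfl).symm
  · obtain ⟨he0, heN⟩ := mem_Ioc.mp he
    exact mem_filter.mpr ⟨mem_Ioc.mpr ⟨by positivity,
      (Nat.mul_comm q e).trans_le ((Nat.le_div_iff_mul_le hq0).mp heN)⟩, dvd_mul_right q e⟩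
  · exact Nat.eq_of_mul_eq_mul_left hq0 h
  · obtain ⟨hmem, e, rfl⟩ := mem_filter.mp hn
    obtain ⟨h0, hN⟩ := mem_Ioc.mp hmem
    exact ⟨e, mem_Ioc.mpr ⟨Nat.pos_of_mul_pos_left h0,
      (Nat.le_div_iff_mul_le hq0).mpr (by lia)⟩, rfl⟩

theorem card_divisors_le_two_mul_sqrt (n : ℕ) : #n.divisors ≤ 2 * n.sqrt := by
  have hsub : n.divisors ⊆ Ioc 0 n.sqrt ∪ (Ioc 0 n.sqrt).image (n / ·) := by
    intro d hd
    obtain ⟨⟨e, rfl⟩, hn⟩ := Nat.mem_divisors.mp hd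
    obtain ⟨hd0, he0⟩ := mul_ne_zero_iff.mp hn
    rw [mem_union, mem_image]
    by_cases hle : d ≤ (d * e).sqrt
    · exact Or.inl (mem_Ioc.mpr ⟨by lia, hle⟩)
    · refine Or.inr ⟨e, mem_Ioc.mpr ⟨by lia, ?_⟩, Nat.mul_div_cancel d (by lia)⟩
      by_contra! h
      have h1 : d * e < ((d * e).sqrt + 1) * ((d * e).sqrt + 1) := Nat.lt_succ_sqrt _
      have h2 := Nat.mul_le_mul (Nat.succ_le_of_lt (not_le.mp hle)) (Nat.succ_le_of_lt h)
      lia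
  calc #n.divisors ≤ #(Ioc 0 n.sqrt) + #((Ioc 0 n.sqrt).image (n / ·)) :=
        (card_le_card hsub).trans (card_union_le _ _)
    _ ≤ #(Ioc 0 n.sqrt) + #(Ioc 0 n.sqrt) := Nat.add_le_add_left card_image_le _
    _ = 2 * n.sqrt := by rw [Nat.card_Ioc]; lia

theorem moebius_prime_mul {p : ℕ} (hp : p.Prime) {n : ℕ} :
    μ (p * n) = if p ∣ n then 0 else -μ n := by
  split_ifs with h
  · refine ArithmeticFunction.moebius_eq_zero_of_not_squarefree fun hsq ↦ hp.not_isUnit ?_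
    exact hsq p (mul_dvd_mul_left p h)
  · rw [ArithmeticFunction.isMultiplicative_moebius.map_mul_of_coprime
      ((hp.coprime_iff_not_dvd).mpr h), ArithmeticFunction.moebius_apply_prime hp, neg_one_mul]

theorem sum_moebius_prime_mul_mul {p a : ℕ} (hp : p.Prime) (hpa : ¬p ∣ a) (G : ℕ → ℝ) (y : ℕ) :
    ∑ e ∈ Ioc 0 y, (μ (p * a * e) : ℝ) * G (y / e)
      = ∑ e ∈ Ioc 0 (y / p), (μ (p * a * e) : ℝ) * G (y / p / e)
        - ∑ e ∈ Ioc 0 y, (μ (a * e) : ℝ) * G (y / e) := by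
  have hmultiples : ∑ e ∈ Ioc 0 (y / p), (μ (p * a * e) : ℝ) * G (y / p / e)
      = ∑ e ∈ Ioc 0 y, if p ∣ e then (μ (a * e) : ℝ) * G (y / e) else 0 := by
    rw [← sum_filter, sum_Ioc_filter_dvd hp.ne_zero]
    refine sum_congr rfl fun e _ ↦ ?_
    rw [Nat.div_div_eq_div_mul, mul_comm p a, mul_assoc]
  rw [hmultiples, ← sum_sub_distrib]
  refine sum_congr rfl fun e _ ↦ ?_
  rw [mul_assoc, moebius_prime_mul hp]
  by_cases hpe : p ∣ e <;> simp [hp.dvd_mul, hpa, hpe]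

theorem abs_sum_moebius_mul_le {G : ℕ → ℝ} {K : ℝ} (hK : 0 ≤ K) {Y : ℕ}
    (hG : ∀ y ≤ Y, |∑ e ∈ Ioc 0 y, (μ e : ℝ) * G (y / e)| ≤ K * y) (q : ℕ) (hq : q ≠ 0) {y : ℕ}
    (hy : y ≤ Y) :
    |∑ e ∈ Ioc 0 y, (μ (q * e) : ℝ) * G (y / e)| ≤ #q.divisors * K * y := by
  induction q using induction_on_primes generalizing y with
  | zero => contradiction
  | one => simpa using hG y hy
  | prime_mul p a hp ih =>
    by_cases hpa : p ∣ a
    · have hzero : ∀ e, μ (p * a * e) = 0 := fun e ↦ by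
        rw [mul_assoc, moebius_prime_mul hp, if_pos (hpa.mul_right e)]
      simpa [hzero] using by positivity
    have hbound := fun {y} ↦ ih (y := y) (right_ne_zero_of_mul hq)
    have hcard : (#(p * a).divisors : ℝ) = 2 * #a.divisors := by
      rw [Nat.Coprime.card_divisors_mul ((hp.coprime_iff_not_dvd).mpr hpa), hp.divisors,
        card_pair hp.one_lt.ne]
      push_cast
      rfl
    induction y using Nat.strong_induction_on with | _ y ihy =>
    rcases y.eq_zero_or_pos with rfl | hy0
    · simp
    rw [sum_moebius_prime_mul_mul hp hpa, hcard]
    have hlt : y / p < y := Nat.div_lt_self hy0 hp.one_lt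
    have hhalf : (2 : ℝ) * (y / p : ℕ) ≤ y := by
      exact_mod_cast (Nat.mul_le_mul_right _ hp.two_le).trans (Nat.mul_div_le y p)
    have hsmall := hcard ▸ ihy (y / p) hlt (hlt.le.trans hy)
    have hD : 0 ≤ #a.divisors * K := by positivity
    refine (abs_sub _ _).trans ((add_le_add hsmall (hbound hy)).trans ?_)
    nlinarith

theorem abs_sum_moebius_mul_sum_log_sq_le {q : ℕ} (hq : q ≠ 0) (y : ℕ) :
    |∑ e ∈ Ioc 0 y, (μ (q * e) : ℝ) * ∑ m ∈ Ioc 0 (y / e), log m ^ 2|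
      ≤ 72 * √q * y * (1 + log y) := by
  have hbase : ∀ z ≤ y, |∑ e ∈ Ioc 0 z, (μ e : ℝ) * ∑ m ∈ Ioc 0 (z / e), log m ^ 2|
      ≤ 36 * (1 + log y) * z := by
    intro z hz
    rcases z.eq_zero_or_pos with rfl | hz0
    · simp
    have hconv := ArithmeticFunction.sum_Ioc_mul_eq_sum_sum (μ : ArithmeticFunction ℝ)
      (ArithmeticFunction.log.pmul ArithmeticFunction.log) z
    simp only [ArithmeticFunction.intCoe_apply, ArithmeticFunction.pmul_apply,
      ArithmeticFunction.log_apply, ← sq] at hconv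
    rw [← hconv, abs_of_nonneg]
    · refine sum_moebius_mul_log_sq_le.trans ?_
      rw [mul_right_comm]
      gcongr
    · rw [← vonMangoldt_pmul_log_add_mul_self]
      refine sum_nonneg fun n _ ↦ add_nonneg
        (mul_nonneg vonMangoldt_nonneg (log_natCast_nonneg n)) ?_
      rw [ArithmeticFunction.mul_apply]
      exact sum_nonneg fun _ _ ↦ mul_nonneg vonMangoldt_nonneg vonMangoldt_nonneg
  have hK : 0 ≤ 36 * (1 + log y) := by positivity
  refine (abs_sum_moebius_mul_le (G := fun M ↦ ∑ m ∈ Ioc 0 M, log m ^ 2) hK hbase q hq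
    le_rfl).trans ?_
  have hcard : (#q.divisors : ℝ) ≤ 2 * √q := by
    have : (#q.divisors : ℝ) ≤ 2 * (q.sqrt : ℕ) := by
      exact_mod_cast card_divisors_le_two_mul_sqrt q
    linarith [Real.nat_sqrt_le_real_sqrt (a := q)]
  calc #q.divisors * (36 * (1 + log y)) * y ≤ 2 * √q * (36 * (1 + log y)) * y := by gcongr
    _ = _ := by ring

end MoebiusMultiples

section TypeOneRational

open scoped ArithmeticFunction.Moebius

theorem log_natCast_div_sq_le (N d : ℕ) : log (N / d : ℕ) ^ 2 ≤ 16 * √N * (√d)⁻¹ := by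
  have hx : 0 ≤ (N / d : ℝ) := by positivity
  have hroot : ((N / d : ℝ) ^ (1 / 4 : ℝ)) ^ 2 = √(N / d) := by
    rw [← rpow_mul_natCast hx, sqrt_eq_rpow]
    norm_num
  have hlog : log (N / d : ℕ) ≤ 4 * (N / d : ℝ) ^ (1 / 4 : ℝ) :=
    calc log (N / d : ℕ) ≤ (N / d : ℕ) ^ (1 / 4 : ℝ) / (1 / 4) :=
          log_le_rpow_div (Nat.cast_nonneg _) (by norm_num)
      _ ≤ (N / d : ℝ) ^ (1 / 4 : ℝ) / (1 / 4) := by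
          gcongr
          exact Nat.cast_div_le
      _ = _ := by ring
  calc log (N / d : ℕ) ^ 2 ≤ (4 * (N / d : ℝ) ^ (1 / 4 : ℝ)) ^ 2 :=
        pow_le_pow_left₀ (log_natCast_nonneg _) hlog 2
    _ = _ := by rw [mul_pow, hroot, sqrt_div N.cast_nonneg]; ring

theorem sum_Ioc_inv_sqrt_le (N : ℕ) : ∑ d ∈ Ioc 0 N, (√d)⁻¹ ≤ 2 * √N := by
  induction N with
  | zero => simp
  | succ N ih =>
    rw [sum_Ioc_succ_top N.zero_le]
    have hsucc : 0 < √(N + 1 : ℕ) := sqrt_pos.mpr (by positivity)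
    have hdiff : √(N + 1 : ℕ) ^ 2 - √N ^ 2 = 1 := by
      rw [sq_sqrt (Nat.cast_nonneg _), sq_sqrt (Nat.cast_nonneg _)]
      push_cast
      ring
    have hinv : (√(N + 1 : ℕ))⁻¹ ≤ 2 * (√(N + 1 : ℕ) - √N) := by
      rw [inv_le_iff_one_le_mul₀ hsucc]
      nlinarith [sq_nonneg (√(N + 1 : ℕ) - √N)]
    linarith

theorem norm_sum_log_sq_mul_fourierChar_le {γ : ℝ} (hγ : ‖(γ : UnitAddCircle)‖ ≠ 0) (M : ℕ) :
    ‖∑ m ∈ Ioc 0 M, (log m ^ 2 : ℝ) * (𝐞 (m * γ) : ℂ)‖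
      ≤ log M ^ 2 * ‖(γ : UnitAddCircle)‖⁻¹ := by
  refine norm_sum_monotone_mul_le (g := fun m ↦ log m ^ 2) (fun a b hab ↦ ?_) (by simp)
    (norm_sum_Ioc_fourierChar_le hγ) M
  exact pow_le_pow_left₀ (log_natCast_nonneg a) (monotone_log_natCast hab) 2

variable {q : ℕ} [NeZero q] {r : ℤ}

theorem sum_antitoneOn_mul_norm_inv_le (hrq : IsCoprime r q) {g : ℕ → ℝ}
    (hg : AntitoneOn g (Set.Ioi 0)) (hg0 : ∀ n, 0 ≤ g n) (N : ℕ) :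
    ∑ h ∈ Ioc 0 N, g h * ‖((h * (r / q) : ℝ) : UnitAddCircle)‖⁻¹
      ≤ 2 * (1 + log q) * (q * g 1 + ∑ h ∈ Ioc 0 N, g h) := by
  have hq0 := Nat.pos_of_neZero q
  set K := N / q
  have hblock (j : ℕ) : ∑ h ∈ Ioc (q * j) (q * j + q),
      g h * ‖((h * (r / q) : ℝ) : UnitAddCircle)‖⁻¹ ≤ 2 * (1 + log q) * (q * g (q * j + 1)) :=
    calc _ ≤ ∑ h ∈ Ioc (q * j) (q * j + q),
          g (q * j + 1) * ‖((h * (r / q) : ℝ) : UnitAddCircle)‖⁻¹ := by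
          refine sum_le_sum fun h hh ↦ mul_le_mul_of_nonneg_right ?_ (by positivity)
          have := mem_Ioc.mp hh
          exact hg (Nat.succ_pos _) (Set.mem_Ioi.mpr (by lia)) (by lia)
      _ ≤ g (q * j + 1) * (2 * q * (1 + log q)) := by
          rw [← mul_sum]
          exact mul_le_mul_of_nonneg_left (sum_block_norm_mul_div_inv_le hrq _) (hg0 _)
      _ = _ := by ring
  have hprev (j : ℕ) : q * g (q * (j + 1) + 1) ≤ ∑ h ∈ Ioc (q * j) (q * j + q), g h := by
    have := card_nsmul_le_sum (Ioc (q * j) (q * j + q)) g (g (q * (j + 1) + 1)) fun h hh ↦ by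
      have := mem_Ioc.mp hh
      exact hg (Set.mem_Ioi.mpr (by lia)) (Nat.succ_pos _) (by lia)
    simpa using this
  calc _ ≤ ∑ h ∈ Ioc 0 (q * (K + 1)), g h * ‖((h * (r / q) : ℝ) : UnitAddCircle)‖⁻¹ :=
        sum_le_sum_of_subset_of_nonneg
          (Ioc_subset_Ioc_right (Nat.lt_mul_div_succ N hq0).le)
          fun h _ _ ↦ mul_nonneg (hg0 h) (by positivity)
    _ ≤ ∑ j ∈ range (K + 1), 2 * (1 + log q) * (q * g (q * j + 1)) := by
        rw [sum_Ioc_mul_eq_sum_sum_block]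
        exact sum_le_sum fun j _ ↦ hblock j
    _ = 2 * (1 + log q) * (q * g 1 + ∑ j ∈ range K, q * g (q * (j + 1) + 1)) := by
        rw [← mul_sum, sum_range_succ', add_comm (q * g 1)]
        simp
    _ ≤ 2 * (1 + log q) * (q * g 1 + ∑ h ∈ Ioc 0 (q * K), g h) := by
        rw [sum_Ioc_mul_eq_sum_sum_block]
        gcongr
        exact hprev _
    _ ≤ _ := by
        gcongr
        · exact fun h _ _ ↦ hg0 h
        · exact Nat.mul_div_le N q

theorem norm_moebius_le_one (n : ℕ) : ‖(μ n : ℂ)‖ ≤ 1 := by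
  rw [Complex.norm_intCast]
  exact_mod_cast ArithmeticFunction.abs_moebius_le_one

theorem norm_sum_moebius_not_dvd_rational_le (hrq : IsCoprime r q) {N : ℕ} (hN : q ^ 2 ≤ N) :
    ‖∑ d ∈ Ioc 0 N with ¬q ∣ d, (μ d : ℂ) * ∑ m ∈ Ioc 0 (N / d),
        (log m ^ 2 : ℝ) * (𝐞 ((d * m : ℕ) * (r / q : ℝ)) : ℂ)‖ ≤ 96 * N * (1 + log q) := by
  have hterm : ∀ d ∈ {d ∈ Ioc 0 N | ¬q ∣ d}, ‖(μ d : ℂ) * ∑ m ∈ Ioc 0 (N / d),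
      (log m ^ 2 : ℝ) * (𝐞 ((d * m : ℕ) * (r / q : ℝ)) : ℂ)‖
        ≤ 16 * √N * ((√d)⁻¹ * ‖((d * (r / q) : ℝ) : UnitAddCircle)‖⁻¹) := by
    intro d hd
    have hnorm := (inv_le_norm_mul_div hrq (mem_filter.mp hd).2).trans_lt'
      (inv_pos.mpr (Nat.cast_pos.mpr (Nat.pos_of_neZero q)))
    have hcomm (m : ℕ) : (d * m : ℕ) * (r / q : ℝ) = m * (d * (r / q)) := by
      push_cast
      ring
    simp_rw [hcomm]
    rw [norm_mul, ← mul_assoc]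
    refine (mul_le_of_le_one_left (norm_nonneg _) (norm_moebius_le_one d)).trans ?_
    refine (norm_sum_log_sq_mul_fourierChar_le hnorm.ne' _).trans ?_
    gcongr
    simpa [mul_assoc] using log_natCast_div_sq_le N d
  have hanti : AntitoneOn (fun d : ℕ ↦ (√d)⁻¹) (Set.Ioi 0) := fun a ha b _ hab ↦ by
    have : 0 < √a := sqrt_pos.mpr (Nat.cast_pos.mpr ha)
    exact inv_anti₀ this (sqrt_le_sqrt (Nat.cast_le.mpr hab))
  have hq : q * √N ≤ N := by
    calc q * √N ≤ √N * √N := by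
          gcongr
          exact le_sqrt_of_sq_le (by exact_mod_cast hN)
      _ = N := mul_self_sqrt N.cast_nonneg
  calc _ ≤ ∑ d ∈ Ioc 0 N, 16 * √N * ((√d)⁻¹ * ‖((d * (r / q) : ℝ) : UnitAddCircle)‖⁻¹) :=
        (norm_sum_le_of_le _ hterm).trans (sum_le_sum_of_subset_of_nonneg (filter_subset _ _)
          fun _ _ _ ↦ by positivity)
    _ ≤ 16 * √N * (2 * (1 + log q) * (q * 1 + 2 * √N)) := by
        rw [← mul_sum]
        gcongr
        refine (sum_antitoneOn_mul_norm_inv_le hrq hanti (fun _ ↦ by positivity) N).trans ?_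
        gcongr
        · simp
        · exact sum_Ioc_inv_sqrt_le N
    _ = 32 * (1 + log q) * (q * √N + 2 * (√N * √N)) := by ring
    _ ≤ 32 * (1 + log q) * (N + 2 * N) := by
        rw [mul_self_sqrt N.cast_nonneg]
        gcongr
    _ = _ := by ring

theorem norm_sum_moebius_dvd_rational_le (N : ℕ) :
    ‖∑ d ∈ Ioc 0 N with q ∣ d, (μ d : ℂ) * ∑ m ∈ Ioc 0 (N / d),
        (log m ^ 2 : ℝ) * (𝐞 ((d * m : ℕ) * (r / q : ℝ)) : ℂ)‖ ≤ 72 * (N / √q) * (1 + log N) := by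
  have hq : (q : ℝ) ≠ 0 := NeZero.ne _
  have heq : ∑ d ∈ Ioc 0 N with q ∣ d, (μ d : ℂ) * ∑ m ∈ Ioc 0 (N / d),
      (log m ^ 2 : ℝ) * (𝐞 ((d * m : ℕ) * (r / q : ℝ)) : ℂ)
        = (∑ e ∈ Ioc 0 (N / q), (μ (q * e) : ℝ) * ∑ m ∈ Ioc 0 (N / q / e), log m ^ 2 : ℝ) := by
    rw [sum_Ioc_filter_dvd (NeZero.ne q)]
    push_cast
    refine sum_congr rfl fun e _ ↦ ?_
    rw [Nat.div_div_eq_div_mul]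
    congr 1
    refine sum_congr rfl fun m _ ↦ ?_
    have : (q * e * m : ℝ) * (r / q) = ((e * m * r : ℤ) : ℝ) := by
      push_cast
      field_simp
    rw [this, fourierChar_intCast]
    simp
  rw [heq, Complex.norm_real, norm_eq_abs]
  refine (abs_sum_moebius_mul_sum_log_sq_le (NeZero.ne q) _).trans ?_
  calc 72 * √q * (N / q : ℕ) * (1 + log (N / q : ℕ)) ≤ 72 * √q * (N / q : ℝ) * (1 + log N) := by
        gcongr ?_ * (1 + ?_)
        · gcongr
          exact Nat.cast_div_le
        · exact monotone_log_natCast (Nat.div_le_self N q)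
    _ = _ := by
        have hsqrt : √q ≠ 0 := (sqrt_pos.mpr (Nat.cast_pos.mpr (Nat.pos_of_neZero q))).ne'
        field_simp
        rw [sq_sqrt q.cast_nonneg, mul_comm]

theorem norm_sum_sum_moebius_log_sq_rational_le (hrq : IsCoprime r q) {N : ℕ} (hN : q ^ 2 ≤ N) :
    ‖∑ d ∈ Ioc 0 N, (μ d : ℂ) * ∑ m ∈ Ioc 0 (N / d),
        (log m ^ 2 : ℝ) * (𝐞 ((d * m : ℕ) * (r / q : ℝ)) : ℂ)‖
      ≤ 72 * (N / √q) * (1 + log N) + 96 * N * (1 + log q) := by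
  rw [← sum_filter_add_sum_filter_not _ (q ∣ ·)]
  exact (norm_add_le _ _).trans (add_le_add (norm_sum_moebius_dvd_rational_le N)
    (norm_sum_moebius_not_dvd_rational_le hrq hN))

end TypeOneRational

section MajorArcs

open scoped ArithmeticFunction.Moebius
open ArithmeticFunction (vonMangoldt_nonneg)

/-- The exponential sum `∑ Λ(n) log n e(nα)` over `1 ≤ n ≤ N`. The weight `Λ(n) log n` puts mass
`log p ^ 2` on a prime `p`; Selberg's identity decomposes it. -/
noncomputable def vonMangoldtLogSum (N : ℕ) (α : ℝ) : ℂ :=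
  ∑ n ∈ Ioc 0 N, (Λ n * log n : ℝ) * 𝐞 (n * α)

theorem vonMangoldtLogSum_eq (N : ℕ) (α : ℝ) :
    vonMangoldtLogSum N α
      = ∑ d ∈ Ioc 0 N, (μ d : ℂ) * ∑ m ∈ Ioc 0 (N / d),
          (log m ^ 2 : ℝ) * (𝐞 ((d * m : ℕ) * α) : ℂ)
        - ∑ a ∈ Ioc 0 N, (Λ a : ℂ) * ∑ b ∈ Ioc 0 (N / a), (Λ b : ℂ) * 𝐞 ((a * b : ℕ) * α) :=
  sum_vonMangoldt_mul_log_mul_eq (fun n ↦ (𝐞 (n * α) : ℂ)) N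

theorem norm_fourierChar_sub_le (x y : ℝ) : ‖(𝐞 x - 𝐞 y : ℂ)‖ ≤ 2 * π * |x - y| := by
  have : (𝐞 x : ℂ) = 𝐞 y * 𝐞 (x - y) := by
    rw [← Circle.coe_mul, ← AddChar.map_add_eq_mul, add_sub_cancel]
  rw [this, ← mul_sub_one, norm_mul, Circle.norm_coe, one_mul]
  exact norm_fourierChar_sub_one_le _

theorem norm_vonMangoldtLogSum_sub_le (N : ℕ) (α β : ℝ) :
    ‖vonMangoldtLogSum N α - vonMangoldtLogSum N β‖ ≤ 12 * π * N ^ 2 * log N * |α - β| := by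
  rw [vonMangoldtLogSum, vonMangoldtLogSum, ← sum_sub_distrib]
  calc _ ≤ ∑ n ∈ Ioc 0 N, Λ n * log n * (2 * π * (N * |α - β|)) := by
        refine norm_sum_le_of_le _ fun n hn ↦ ?_
        have hw : 0 ≤ Λ n * log n := mul_nonneg vonMangoldt_nonneg (log_natCast_nonneg n)
        have hnN : (n : ℝ) ≤ N := Nat.cast_le.mpr (mem_Ioc.mp hn).2
        rw [← mul_sub, norm_mul, Complex.norm_real, norm_of_nonneg hw]
        gcongr
        refine (norm_fourierChar_sub_le _ _).trans ?_
        rw [← mul_sub, abs_mul, Nat.abs_cast]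
        gcongr
    _ ≤ 6 * N * log N * (2 * π * (N * |α - β|)) := by
        rw [← sum_mul]
        gcongr
        exact sum_vonMangoldt_mul_log_le N
    _ = _ := by ring

variable {q : ℕ} [NeZero q] {r : ℤ}

theorem norm_vonMangoldtLogSum_rational_le (hrq : IsCoprime r q) (hq : 2 ≤ q) {N : ℕ}
    (hN : 2 * q ^ 4 ≤ N) :
    ‖vonMangoldtLogSum N (r / q)‖
      ≤ 252 * (N * (1 + log q) ^ 2 / √q) * (1 + log N) + 180 * N * (1 + log q) := by
  rw [vonMangoldtLogSum_eq]
  have hN2 : q ^ 2 ≤ N := by nlinarith [sq_nonneg (q ^ 2), Nat.one_le_pow 2 q (by lia)]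
  have hle : (N / √q) * (1 + log N) ≤ (N * (1 + log q) ^ 2 / √q) * (1 + log N) := by
    gcongr
    exact le_mul_of_one_le_right N.cast_nonneg (one_le_pow₀ (by simpa using log_natCast_nonneg q))
  have hI := norm_sum_sum_moebius_log_sq_rational_le hrq hN2
  have hII := norm_sum_sum_vonMangoldt_rational_le hrq hq hN
  refine (norm_sub_le _ _).trans ((add_le_add hI hII).trans ?_)
  linarith

theorem norm_vonMangoldtLogSum_le_of_near_rational (hrq : IsCoprime r q) (hq : 2 ≤ q) {N : ℕ}
    (hN : 2 * q ^ 4 ≤ N) {α : ℝ} (hα : N * log N * |q * α - r| ≤ 1) :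
    ‖vonMangoldtLogSum N α‖
      ≤ 252 * (N * (1 + log q) ^ 2 / √q) * (1 + log N) + 228 * N * (1 + log q) := by
  have hq0 : (0 : ℝ) < q := Nat.cast_pos.mpr (Nat.pos_of_neZero q)
  have hdist : |α - r / q| = |q * α - r| / q := by
    rw [← abs_of_pos hq0, ← abs_div, abs_of_pos hq0]
    congr 1
    field_simp
  have hperturb : ‖vonMangoldtLogSum N α - vonMangoldtLogSum N (r / q)‖
      ≤ 48 * N * (1 + log q) :=
    calc _ ≤ 12 * π * N ^ 2 * log N * |α - r / q| := norm_vonMangoldtLogSum_sub_le _ _ _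
      _ = 12 * π * N * (N * log N * |q * α - r|) / q := by rw [hdist]; ring
      _ ≤ 12 * 4 * N * 1 / 1 := by
          gcongr
          · exact pi_le_four
          · exact_mod_cast Nat.pos_of_neZero q
      _ ≤ _ := by nlinarith [mul_nonneg N.cast_nonneg (log_natCast_nonneg q)]
  have := norm_vonMangoldtLogSum_rational_le hrq hq hN
  linarith [norm_le_norm_add_norm_sub' (vonMangoldtLogSum N α) (vonMangoldtLogSum N (r / q))]

end MajorArcs

section TypeTwoMinorArcs

open scoped ComplexConjugate

theorem norm_sq_sum_fourierChar_eq (s : Finset ℕ) (g : ℕ → ℝ) (a : ℕ) (α : ℝ) :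
    ((‖∑ b ∈ s, (g b : ℂ) * 𝐞 ((a * b : ℕ) * α)‖ ^ 2 : ℝ) : ℂ)
      = ∑ b ∈ s, ∑ b' ∈ s, (g b * g b' : ℝ) * (𝐞 (a * ((b - b') * α)) : ℂ) := by
  rw [Complex.ofReal_pow, ← Complex.mul_conj', map_sum, sum_mul_sum]
  refine sum_congr rfl fun b _ ↦ sum_congr rfl fun b' _ ↦ ?_
  have hphase : (𝐞 (a * ((b - b') * α)) : ℂ)
      = 𝐞 ((a * b : ℕ) * α) * conj (𝐞 ((a * b' : ℕ) * α) : ℂ) := by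
    rw [← Circle.coe_inv_eq_conj, ← Circle.coe_mul, ← AddChar.map_neg_eq_inv,
      ← AddChar.map_add_eq_mul]
    push_cast
    ring_nf
  rw [hphase, RingHom.map_mul, Complex.conj_ofReal, Complex.ofReal_mul]
  ring

theorem sum_natCast_mul_norm_sq_le {s : Finset ℕ} (hs : ∀ b ∈ s, 0 < b) (g : ℕ → ℝ) (N : ℕ)
    (α : ℝ) :
    ∑ a ∈ Ioc 0 N, (a : ℝ) * ‖∑ b ∈ s with a * b ≤ N, (g b : ℂ) * 𝐞 ((a * b : ℕ) * α)‖ ^ 2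
      ≤ ∑ b ∈ s, ∑ b' ∈ s, |g b| * |g b'|
          * ‖∑ a ∈ Ioc 0 (N / max b b'), (a : ℂ) * 𝐞 (a * ((b - b') * α))‖ := by
  have hrange : ∀ b ∈ s, ∀ b' a : ℕ,
      a ∈ Ioc 0 (N / max b b') ↔ a ∈ Ioc 0 N ∧ a * b ≤ N ∧ a * b' ≤ N := by
    intro b hb b' a
    have hmax : 0 < max b b' := (hs b hb).trans_le (le_max_left _ _)
    have hself := Nat.le_mul_of_pos_right a (hs b hb)
    rw [mem_Ioc, mem_Ioc, Nat.le_div_iff_mul_le hmax, ← Nat.mul_max_mul_left, max_le_iff]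
    exact ⟨fun h ↦ ⟨⟨h.1, hself.trans h.2.1⟩, h.2⟩, fun h ↦ ⟨h.1.1, h.2⟩⟩
  have hexpand : ((∑ a ∈ Ioc 0 N, (a : ℝ)
        * ‖∑ b ∈ s with a * b ≤ N, (g b : ℂ) * 𝐞 ((a * b : ℕ) * α)‖ ^ 2 : ℝ) : ℂ)
      = ∑ b ∈ s, ∑ b' ∈ s, (g b * g b' : ℝ)
          * ∑ a ∈ Ioc 0 (N / max b b'), (a : ℂ) * 𝐞 (a * ((b - b') * α)) := by
    simp_rw [Complex.ofReal_sum, Complex.ofReal_mul _ (_ ^ 2), norm_sq_sum_fourierChar_eq, mul_sum,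
      mul_left_comm (Complex.ofReal (Nat.cast _)), Complex.ofReal_natCast]
    rw [sum_comm' (t' := s) (s' := fun b ↦ {a ∈ Ioc 0 N | a * b ≤ N})
      fun a b ↦ by simp only [mem_filter]; tauto]
    refine sum_congr rfl fun b hb ↦ sum_comm' fun a b' ↦ ?_
    rw [hrange b hb, mem_filter, mem_filter]
    tauto
  rw [← norm_of_nonneg (sum_nonneg fun a _ ↦ by positivity), ← Complex.norm_real, hexpand]
  refine norm_sum_le_of_le _ fun b _ ↦ norm_sum_le_of_le _ fun b' _ ↦ ?_
  rw [norm_mul, Complex.norm_real, norm_mul, norm_eq_abs, norm_eq_abs]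

theorem norm_sum_sum_mul_sq_le (f g : ℕ → ℝ) {s : Finset ℕ} (hs : ∀ b ∈ s, 0 < b) (N : ℕ)
    (α : ℝ) :
    ‖∑ b ∈ s, (g b : ℂ) * ∑ a ∈ Ioc 0 (N / b), (f a : ℂ) * 𝐞 ((a * b : ℕ) * α)‖ ^ 2
      ≤ (∑ a ∈ Ioc 0 N, f a ^ 2 / a) * ∑ b ∈ s, ∑ b' ∈ s, |g b| * |g b'|
          * ‖∑ a ∈ Ioc 0 (N / max b b'), (a : ℂ) * 𝐞 (a * ((b - b') * α))‖ := by
  have hswap : ∑ b ∈ s, (g b : ℂ) * ∑ a ∈ Ioc 0 (N / b), (f a : ℂ) * 𝐞 ((a * b : ℕ) * α)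
      = ∑ a ∈ Ioc 0 N, (f a : ℂ)
          * ∑ b ∈ s with a * b ≤ N, (g b : ℂ) * 𝐞 ((a * b : ℕ) * α) := by
    simp_rw [mul_sum, mul_left_comm (g _ : ℂ)]
    refine sum_comm' fun b a ↦ ?_
    rw [mem_filter, mem_Ioc, mem_Ioc]
    constructor
    · rintro ⟨hb, ha0, haN⟩
      have := (Nat.le_div_iff_mul_le (hs b hb)).mp haN
      exact ⟨⟨hb, this⟩, ha0, (Nat.le_mul_of_pos_right a (hs b hb)).trans this⟩
    · rintro ⟨⟨hb, hab⟩, ha0, -⟩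
      exact ⟨hb, ha0, (Nat.le_div_iff_mul_le (hs b hb)).mpr hab⟩
  rw [hswap]
  set T : ℕ → ℂ := fun a ↦ ∑ b ∈ s with a * b ≤ N, (g b : ℂ) * 𝐞 ((a * b : ℕ) * α)
  calc ‖∑ a ∈ Ioc 0 N, (f a : ℂ) * T a‖ ^ 2 ≤ (∑ a ∈ Ioc 0 N, |f a| * ‖T a‖) ^ 2 := by
        gcongr
        exact norm_sum_le_of_le _ fun a _ ↦ by rw [norm_mul, Complex.norm_real, norm_eq_abs]
    _ ≤ (∑ a ∈ Ioc 0 N, f a ^ 2 / a) * ∑ a ∈ Ioc 0 N, (a : ℝ) * ‖T a‖ ^ 2 := by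
        refine sum_sq_le_sum_mul_sum_of_sq_le_mul _ (fun _ _ ↦ by positivity)
          (fun _ _ ↦ by positivity) fun a ha ↦ ?_
        have : (a : ℝ) ≠ 0 := Nat.cast_ne_zero.mpr (mem_Ioc.mp ha).1.ne'
        rw [mul_pow, sq_abs]
        field_simp
        rfl
    _ ≤ _ := by
        gcongr
        exact sum_natCast_mul_norm_sq_le hs g N α

theorem norm_sum_natCast_mul_fourierChar_le_sq (M : ℕ) (γ : ℝ) :
    ‖∑ a ∈ Ioc 0 M, (a : ℂ) * 𝐞 (a * γ)‖ ≤ (M : ℝ) ^ 2 := by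
  calc _ ≤ ∑ _ ∈ Ioc 0 M, (M : ℝ) := norm_sum_le_of_le _ fun _ ha ↦ by
        rw [norm_mul, Circle.norm_coe, mul_one, Complex.norm_natCast]
        exact Nat.cast_le.mpr (mem_Ioc.mp ha).2
    _ = _ := by simp [sq]

theorem norm_sum_natCast_mul_fourierChar_le {γ : ℝ} (hγ : ‖(γ : UnitAddCircle)‖ ≠ 0) (M : ℕ) :
    ‖∑ a ∈ Ioc 0 M, (a : ℂ) * 𝐞 (a * γ)‖ ≤ M * ‖(γ : UnitAddCircle)‖⁻¹ := by
  simpa using norm_sum_monotone_mul_le (g := fun a ↦ (a : ℝ)) Nat.mono_cast (by simp)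
    (norm_sum_Ioc_fourierChar_le hγ) M

theorem sum_sum_le_two_mul_of_symm {s : Finset ℕ} {F : ℕ → ℕ → ℝ} (hF : ∀ b b', 0 ≤ F b b')
    (hsymm : ∀ b b', F b b' = F b' b) :
    ∑ b ∈ s, ∑ b' ∈ s, F b b' ≤ 2 * ∑ b ∈ s, ∑ b' ∈ s with b' ≤ b, F b b' := by
  have hsplit : ∀ b b', F b b' ≤ (if b' ≤ b then F b b' else 0) + if b ≤ b' then F b' b else 0 := by
    intro b b'
    have := hF b b'
    rcases le_total b b' with h | h <;> split_ifs <;> linarith [hsymm b b']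
  calc _ ≤ ∑ b ∈ s, ∑ b' ∈ s, ((if b' ≤ b then F b b' else 0) + if b ≤ b' then F b' b else 0) :=
        sum_le_sum fun b _ ↦ sum_le_sum fun b' _ ↦ hsplit b b'
    _ = _ := by
        simp_rw [sum_add_distrib, sum_filter, two_mul]
        rw [sum_comm (f := fun b b' ↦ if b ≤ b' then F b' b else 0)]

theorem sum_Ioc_sub_le {W : ℕ → ℝ} (hW : ∀ h, 0 ≤ W h) (b : ℕ) :
    ∑ b' ∈ Ioc 0 b, W (b - b') ≤ W 0 + ∑ h ∈ Ioc 0 b, W h := by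
  calc _ = ∑ h ∈ range b, W h :=
        sum_nbij' (b - ·) (b - ·) (fun x hx ↦ by simp at hx ⊢; lia)
          (fun x hx ↦ by simp at hx ⊢; lia) (fun x hx ↦ by simp at hx ⊢; lia)
          (fun x hx ↦ by simp at hx ⊢; lia) fun _ _ ↦ rfl
    _ ≤ ∑ h ∈ insert 0 (Ioc 0 b), W h :=
        sum_le_sum_of_subset_of_nonneg (fun h hh ↦ by simp at hh ⊢; lia) fun h _ _ ↦ hW h
    _ = _ := sum_insert (by simp)

variable {q : ℕ} [NeZero q] {r : ℤ}

theorem sum_norm_sum_natCast_mul_fourierChar_le (hrq : IsCoprime r q) {α : ℝ} {b : ℕ}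
    (hα : 2 * b * |q * α - r| ≤ 1) (M : ℕ) :
    ∑ b' ∈ Ioc 0 b, ‖∑ a ∈ Ioc 0 M, (a : ℂ) * 𝐞 (a * ((b - b') * α))‖
      ≤ (M : ℝ) ^ 2 * (b / q + 1) + M * (4 * (b + q) * (1 + log q)) := by
  obtain ⟨W, hW⟩ : ∃ W : ℕ → ℝ, ∀ h, W h = ‖∑ a ∈ Ioc 0 M, (a : ℂ) * 𝐞 (a * (h * α))‖ :=
    ⟨_, fun _ ↦ rfl⟩
  have hWle (h : ℕ) : W h ≤ (M : ℝ) ^ 2 :=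
    (hW h).trans_le (norm_sum_natCast_mul_fourierChar_le_sq M _)
  have hmultiples : ∑ h ∈ Ioc 0 b with q ∣ h, W h ≤ (M : ℝ) ^ 2 * (b / q) :=
    calc _ ≤ ∑ h ∈ Ioc 0 b with q ∣ h, (M : ℝ) ^ 2 :=
          sum_le_sum fun h _ ↦ hWle h
      _ ≤ _ := by
          rw [sum_const, Nat.Ioc_filter_dvd_card_eq_div, nsmul_eq_mul, mul_comm]
          gcongr
          exact Nat.cast_div_le
  have hothers : ∑ h ∈ Ioc 0 b with ¬q ∣ h, W h ≤ M * (4 * (b + q) * (1 + log q)) :=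
    calc _ ≤ ∑ h ∈ Ioc 0 b with ¬q ∣ h, M * ‖((h * α : ℝ) : UnitAddCircle)‖⁻¹ := by
          refine sum_le_sum fun h hh ↦ (hW h).trans_le
            (norm_sum_natCast_mul_fourierChar_le ?_ M)
          obtain ⟨hmem, hqh⟩ := mem_filter.mp hh
          have hhb : (h : ℝ) ≤ b := Nat.cast_le.mpr (mem_Ioc.mp hmem).2
          exact norm_natCast_mul_ne_zero hrq (hα.trans' (by gcongr)) hqh
      _ ≤ _ := by
          rw [← mul_sum]
          gcongr
          exact sum_norm_mul_inv_le hrq hα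
  calc _ = ∑ b' ∈ Ioc 0 b, W (b - b') := sum_congr rfl fun b' hb' ↦ by
        rw [hW, Nat.cast_sub (mem_Ioc.mp hb').2]
    _ ≤ (M : ℝ) ^ 2 + ∑ h ∈ Ioc 0 b, W h :=
        (sum_Ioc_sub_le (fun h ↦ (norm_nonneg _).trans_eq (hW h).symm) b).trans
          (add_le_add_left (hWle 0) _)
    _ ≤ _ := by
        rw [← sum_filter_add_sum_filter_not _ (q ∣ ·)]
        linarith

theorem sum_filter_le_norm_sum_natCast_mul_fourierChar_le (hrq : IsCoprime r q) {α : ℝ} {b : ℕ}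
    (hb : b ≠ 0) (hα : 2 * b * |q * α - r| ≤ 1) (z H N : ℕ) :
    ∑ b' ∈ Ioc z H with b' ≤ b, ‖∑ a ∈ Ioc 0 (N / max b b'), (a : ℂ) * 𝐞 (a * ((b - b') * α))‖
      ≤ N ^ 2 * ((b : ℝ)⁻¹ / q + ((b : ℝ) ^ 2)⁻¹)
        + 4 * N * (1 + log q) * (1 + q * (b : ℝ)⁻¹) := by
  have hb0 : (b : ℝ) ≠ 0 := Nat.cast_ne_zero.mpr hb
  calc _ = ∑ b' ∈ Ioc z H with b' ≤ b,
        ‖∑ a ∈ Ioc 0 (N / b), (a : ℂ) * 𝐞 (a * ((b - b') * α))‖ :=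
        sum_congr rfl fun b' hb' ↦ by rw [max_eq_left (mem_filter.mp hb').2]
    _ ≤ ∑ b' ∈ Ioc 0 b, ‖∑ a ∈ Ioc 0 (N / b), (a : ℂ) * 𝐞 (a * ((b - b') * α))‖ :=
        sum_le_sum_of_subset_of_nonneg (fun b' hb' ↦ by simp at hb' ⊢; lia)
          fun _ _ _ ↦ norm_nonneg _
    _ ≤ (N / b : ℕ) ^ 2 * (b / q + 1) + (N / b : ℕ) * (4 * (b + q) * (1 + log q)) :=
        sum_norm_sum_natCast_mul_fourierChar_le hrq hα _
    _ ≤ (N / b) ^ 2 * (b / q + 1) + (N / b) * (4 * (b + q) * (1 + log q)) := by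
        gcongr <;> exact Nat.cast_div_le
    _ = _ := by field_simp

theorem sum_sum_norm_sum_natCast_mul_fourierChar_le (hrq : IsCoprime r q) {α : ℝ} {z H : ℕ}
    (hz : z ≠ 0) (hzH : z ≤ H) (hα : 2 * H * |q * α - r| ≤ 1) (N : ℕ) :
    ∑ b ∈ Ioc z H, ∑ b' ∈ Ioc z H,
        ‖∑ a ∈ Ioc 0 (N / max b b'), (a : ℂ) * 𝐞 (a * ((b - b') * α))‖
      ≤ 2 * (N ^ 2 * ((1 + log H) / q + (z : ℝ)⁻¹)
        + 4 * N * (1 + log q) * (H + q * (1 + log H))) := by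
  have hsymm (b b' : ℕ) : ‖∑ a ∈ Ioc 0 (N / max b b'), (a : ℂ) * 𝐞 (a * ((b - b') * α))‖
      = ‖∑ a ∈ Ioc 0 (N / max b' b), (a : ℂ) * 𝐞 (a * ((b' - b) * α))‖ := by
    rw [← RCLike.norm_conj, map_sum, max_comm]
    congr 1
    refine sum_congr rfl fun a _ ↦ ?_
    rw [RingHom.map_mul, Complex.conj_natCast, ← Circle.coe_inv_eq_conj, ← AddChar.map_neg_eq_inv]
    ring_nf
  have hinv : ∑ b ∈ Ioc z H, (b : ℝ)⁻¹ ≤ 1 + log H :=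
    (sum_le_sum_of_subset_of_nonneg (Ioc_subset_Ioc_left z.zero_le)
      fun _ _ _ ↦ by positivity).trans (sum_Ioc_inv_le H)
  have hinvsq : ∑ b ∈ Ioc z H, ((b : ℝ) ^ 2)⁻¹ ≤ (z : ℝ)⁻¹ :=
    (sum_Ioc_inv_sq_le_sub hz hzH).trans (sub_le_self _ (by positivity))
  have hcard : (#(Ioc z H) : ℝ) ≤ H := by
    rw [Nat.card_Ioc]
    exact_mod_cast Nat.sub_le H z
  refine (sum_sum_le_two_mul_of_symm (fun _ _ ↦ norm_nonneg _) hsymm).trans ?_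
  gcongr 2 * ?_
  refine (sum_le_sum fun b hb ↦ ?_).trans (b := ∑ b ∈ Ioc z H,
    (N ^ 2 * ((b : ℝ)⁻¹ / q + ((b : ℝ) ^ 2)⁻¹) + 4 * N * (1 + log q) * (1 + q * (b : ℝ)⁻¹))) ?_
  · obtain ⟨hzb, hbH⟩ := mem_Ioc.mp hb
    exact sum_filter_le_norm_sum_natCast_mul_fourierChar_le hrq (Nat.ne_zero_of_lt hzb)
      (hα.trans' (by gcongr)) z H N
  · rw [sum_add_distrib, ← mul_sum, ← mul_sum, sum_add_distrib, sum_add_distrib, ← sum_div,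
      ← mul_sum, sum_const, nsmul_one]
    gcongr

end TypeTwoMinorArcs

section MinorArcs

open scoped ArithmeticFunction.Moebius
open ArithmeticFunction (vonMangoldt_nonneg vonMangoldt_le_log)

variable {q : ℕ} [NeZero q] {r : ℤ} {N z : ℕ} {α : ℝ}

theorem one_add_log_den_le (hz : z ≠ 0) (hzN : z ^ 2 ≤ N) (hqz : q * z ≤ 2 * N) :
    1 + log q ≤ 2 * (1 + log N) := by
  have hN : 1 ≤ N := (Nat.one_le_pow 2 z (by lia)).trans hzN
  have hqN : (q : ℝ) ≤ 2 * N := by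
    exact_mod_cast (Nat.le_mul_of_pos_right q (by lia)).trans hqz
  have hN0 : (N : ℝ) ≠ 0 := by positivity
  calc 1 + log q ≤ 1 + log (2 * N) := by
        gcongr
        exact_mod_cast Nat.pos_of_neZero q
    _ = 1 + log 2 + log N := by rw [log_mul two_ne_zero hN0]; ring
    _ ≤ _ := by linarith [log_two_lt_d9, log_natCast_nonneg N]

theorem sum_sum_norm_sum_natCast_mul_fourierChar_le_div (hrq : IsCoprime r q) (hz : z ≠ 0)
    (hzN : z ^ 2 ≤ N) (hzq : z ≤ q) (hqz : q * z ≤ 2 * N)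
    (hα : 2 * (N / z : ℕ) * |q * α - r| ≤ 1) :
    ∑ b ∈ Ioc z (N / z), ∑ b' ∈ Ioc z (N / z),
        ‖∑ a ∈ Ioc 0 (N / max b b'), (a : ℂ) * 𝐞 (a * ((b - b') * α))‖
      ≤ 52 * (1 + log N) ^ 2 * (N ^ 2 / z) := by
  have hz0 : (0 : ℝ) < z := by positivity
  have hzH : z ≤ N / z := (Nat.le_div_iff_mul_le (by lia)).mpr (by rwa [← sq])
  have hlogH : log (N / z : ℕ) ≤ log N := monotone_log_natCast (Nat.div_le_self N z)
  have hlogq := one_add_log_den_le hz hzN hqz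
  have hH : ((N / z : ℕ) : ℝ) ≤ N / z := Nat.cast_div_le
  have hqle : (q : ℝ) ≤ 2 * (N / z) := by
    rw [← mul_div_assoc, le_div_iff₀ hz0]
    exact_mod_cast hqz
  have hL1 : 1 ≤ 1 + log N := by linarith [log_natCast_nonneg N]
  calc _ ≤ 2 * (N ^ 2 * ((1 + log (N / z : ℕ)) / q + (z : ℝ)⁻¹)
          + 4 * N * (1 + log q) * ((N / z : ℕ) + q * (1 + log (N / z : ℕ)))) :=
        sum_sum_norm_sum_natCast_mul_fourierChar_le hrq hz hzH hα N
    _ ≤ 2 * (N ^ 2 * ((1 + log N) / z + (1 + log N) * (z : ℝ)⁻¹)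
          + 4 * N * (2 * (1 + log N)) * (N / z * (1 + log N) + 2 * (N / z) * (1 + log N))) := by
        gcongr
        · exact le_mul_of_one_le_left (by positivity) hL1
        · exact hH.trans (le_mul_of_one_le_right (by positivity) hL1)
    _ = 4 * (1 + log N) * (N ^ 2 / z) + 48 * (1 + log N) ^ 2 * (N ^ 2 / z) := by
        field_simp
        ring
    _ ≤ 4 * (1 + log N) ^ 2 * (N ^ 2 / z) + 48 * (1 + log N) ^ 2 * (N ^ 2 / z) := by
        gcongr
        exact le_self_pow₀ hL1 two_ne_zero
    _ = _ := by ring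

theorem norm_sum_sum_mul_fourierChar_le_div_sqrt (hrq : IsCoprime r q) (hz : z ≠ 0)
    (hzN : z ^ 2 ≤ N) (hzq : z ≤ q) (hqz : q * z ≤ 2 * N)
    (hα : 2 * (N / z : ℕ) * |q * α - r| ≤ 1) {f g : ℕ → ℝ} {F G : ℝ}
    (hf : ∀ a ∈ Ioc 0 N, |f a| ≤ F) (hg : ∀ b ∈ Ioc z (N / z), |g b| ≤ G) (hF : 0 ≤ F)
    (hG : 0 ≤ G) :
    ‖∑ b ∈ Ioc z (N / z), (g b : ℂ) * ∑ a ∈ Ioc 0 (N / b), (f a : ℂ) * 𝐞 ((a * b : ℕ) * α)‖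
      ≤ 8 * (F * G) * (1 + log N) ^ 2 * (N / √z) := by
  have hL1 : 1 ≤ 1 + log N := by linarith [log_natCast_nonneg N]
  have hfsum : ∑ a ∈ Ioc 0 N, f a ^ 2 / a ≤ F ^ 2 * (1 + log N) :=
    calc _ ≤ ∑ a ∈ Ioc 0 N, F ^ 2 * (a : ℝ)⁻¹ := sum_le_sum fun a ha ↦ by
          rw [div_eq_mul_inv, ← sq_abs]
          gcongr
          exact hf a ha
      _ ≤ _ := by
          rw [← mul_sum]
          gcongr
          exact sum_Ioc_inv_le N
  refine le_of_sq_le_sq ?_ (by positivity)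
  calc _ ≤ (∑ a ∈ Ioc 0 N, f a ^ 2 / a) * ∑ b ∈ Ioc z (N / z), ∑ b' ∈ Ioc z (N / z),
          |g b| * |g b'| * ‖∑ a ∈ Ioc 0 (N / max b b'), (a : ℂ) * 𝐞 (a * ((b - b') * α))‖ :=
        norm_sum_sum_mul_sq_le f g (fun b hb ↦ Nat.zero_lt_of_lt (mem_Ioc.mp hb).1) N α
    _ ≤ F ^ 2 * (1 + log N) * (G ^ 2 * (52 * (1 + log N) ^ 2 * (N ^ 2 / z))) := by
        gcongr
        refine le_trans ?_ (mul_le_mul_of_nonneg_left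
          (sum_sum_norm_sum_natCast_mul_fourierChar_le_div hrq hz hzN hzq hqz hα) (sq_nonneg G))
        simp_rw [mul_sum, sq]
        gcongr with b hb b' hb'
        exacts [hg b hb, hg b' hb']
    _ = 52 * (F * G) ^ 2 * (1 + log N) ^ 3 * (N ^ 2 / z) := by ring
    _ ≤ 64 * (F * G) ^ 2 * (1 + log N) ^ 4 * (N ^ 2 / z) := by
        gcongr
        · norm_num
        · norm_num
    _ = _ := by
        rw [mul_pow _ (N / √z), div_pow, sq_sqrt z.cast_nonneg]
        ring

theorem norm_sum_Ioc_sum_mul_fourierChar_le_add (hrq : IsCoprime r q) (hz : z ≠ 0)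
    (hzN : z ^ 2 ≤ N) (hzq : z ≤ q) (hqz : q * z ≤ 2 * N)
    (hα : 2 * (N / z : ℕ) * |q * α - r| ≤ 1) {f g : ℕ → ℝ} {F G : ℝ}
    (hf : ∀ a ∈ Ioc 0 N, |f a| ≤ F) (hg : ∀ b ∈ Ioc z (N / z), |g b| ≤ G) (hF : 0 ≤ F)
    (hG : 0 ≤ G) :
    ‖∑ a ∈ Ioc z N, (f a : ℂ) * ∑ b ∈ Ioc 0 (N / a), (g b : ℂ) * 𝐞 ((a * b : ℕ) * α)‖
      ≤ ‖∑ b ∈ Ioc 0 z, (g b : ℂ) * ∑ a ∈ Ioc z (N / b), (f a : ℂ) * 𝐞 ((b * a : ℕ) * α)‖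
        + 8 * (F * G) * (1 + log N) ^ 2 * (N / √z) := by
  have hzH : z ≤ N / z := (Nat.le_div_iff_mul_le (by lia)).mpr (by rwa [← sq])
  have htrunc (M : ℕ) (u : ℕ → ℂ) : ∑ a ∈ Ioc z M, (f a : ℂ) * u a
      = ∑ a ∈ Ioc 0 M, ((if z < a then f a else 0 : ℝ) : ℂ) * u a := by
    rw [← sum_subset (Ioc_subset_Ioc_left z.zero_le)]
    · exact sum_congr rfl fun a ha ↦ by rw [if_pos (mem_Ioc.mp ha).1]
    · intro a ha ha'
      rw [mem_Ioc] at ha ha'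
      rw [if_neg (by lia), Complex.ofReal_zero, zero_mul]
  have hswap : ∑ a ∈ Ioc z N, (f a : ℂ) * ∑ b ∈ Ioc 0 (N / a), (g b : ℂ) * 𝐞 ((a * b : ℕ) * α)
      = ∑ b ∈ Ioc 0 (N / z), (g b : ℂ) * ∑ a ∈ Ioc z (N / b), (f a : ℂ) * 𝐞 ((a * b : ℕ) * α) := by
    simp_rw [mul_sum]
    rw [sum_Ioc_sum_Ioc_div_comm _ hz]
    simp_rw [mul_left_comm]
  rw [hswap, ← sum_Ioc_consecutive _ z.zero_le hzH]
  refine (norm_add_le _ _).trans (add_le_add (by simp_rw [mul_comm]; rfl) ?_)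
  simp_rw [htrunc]
  refine norm_sum_sum_mul_fourierChar_le_div_sqrt hrq hz hzN hzq hqz hα (fun a ha ↦ ?_) hg hF hG
  split_ifs
  exacts [hf a ha, by simpa using hF]

theorem norm_sum_sum_vonMangoldt_minorArc_le (hrq : IsCoprime r q) (hz : z ≠ 0)
    (hzN : z ^ 2 ≤ N) (hzq : z ≤ q) (hqz : q * z ≤ 2 * N)
    (hα : 2 * (N / z : ℕ) * |q * α - r| ≤ 1) :
    ‖∑ a ∈ Ioc 0 N, (Λ a : ℂ) * ∑ b ∈ Ioc 0 (N / a), (Λ b : ℂ) * 𝐞 ((a * b : ℕ) * α)‖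
      ≤ 12 * N * (log z + 6) + 8 * (1 + log N) ^ 4 * (N / √z) := by
  have hΛ (a : ℕ) (ha : a ≤ N) : |Λ a| ≤ log N := by
    rw [abs_of_nonneg vonMangoldt_nonneg]
    exact vonMangoldt_le_log.trans (monotone_log_natCast ha)
  have hhead (Y : ℕ) : ‖∑ a ∈ Ioc 0 z, (Λ a : ℂ)
      * ∑ b ∈ Ioc Y (N / a), (Λ b : ℂ) * 𝐞 ((a * b : ℕ) * α)‖ ≤ 6 * N * (log z + 6) :=
    calc _ ≤ ∑ a ∈ Ioc 0 z, Λ a * ∑ b ∈ Ioc Y (N / a), Λ b :=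
          norm_sum_vonMangoldt_mul_le_sum (ω := fun n ↦ 𝐞 (n * α))
            (fun _ ↦ (Circle.norm_coe _).le) _ _
      _ ≤ ∑ a ∈ Ioc 0 z, Λ a * ∑ b ∈ Ioc 0 (N / a), Λ b := by
          gcongr
          exact Y.zero_le
      _ ≤ _ := sum_vonMangoldt_mul_sum_le hz
  have htail := norm_sum_Ioc_sum_mul_fourierChar_le_add hrq hz hzN hzq hqz hα (f := fun a ↦ Λ a)
    (g := fun b ↦ Λ b) (fun a ha ↦ hΛ a (mem_Ioc.mp ha).2)
    (fun b hb ↦ hΛ b ((mem_Ioc.mp hb).2.trans (Nat.div_le_self N z))) (log_natCast_nonneg N)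
    (log_natCast_nonneg N)
  have hlog : 8 * (log N * log N) * (1 + log N) ^ 2 * (N / √z)
      ≤ 8 * (1 + log N) ^ 4 * (N / √z) := by
    have := log_natCast_nonneg N
    calc _ ≤ 8 * ((1 + log N) * (1 + log N)) * (1 + log N) ^ 2 * (N / √z) := by
          gcongr <;> linarith
      _ = _ := by ring
  rw [← sum_Ioc_consecutive _ z.zero_le (show z ≤ N by nlinarith)]
  refine (norm_add_le _ _).trans ?_
  linarith [hhead 0, hhead z]

theorem norm_sum_moebius_log_sq_le_of_lt_den (hrq : IsCoprime r q) (hz : z ≠ 0)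
    (hzN : z ^ 2 ≤ N) (hzq : z < q) (hqz : q * z ≤ 2 * N)
    (hα : 2 * z * |q * α - r| ≤ 1) :
    ‖∑ d ∈ Ioc 0 z, (μ d : ℂ) * ∑ m ∈ Ioc 0 (N / d),
        (log m ^ 2 : ℝ) * (𝐞 ((d * m : ℕ) * α) : ℂ)‖ ≤ 32 * (1 + log N) ^ 3 * (N / z) := by
  have hndvd : ∀ d ∈ Ioc 0 z, ¬q ∣ d := fun d hd h ↦ by
    have := Nat.le_of_dvd (mem_Ioc.mp hd).1 h
    have := (mem_Ioc.mp hd).2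
    lia
  have hz0 : (0 : ℝ) < z := by positivity
  have hsum : (z : ℝ) + q ≤ 4 * (N / z) := by
    have : (z : ℝ) ≤ q := Nat.cast_le.mpr hzq.le
    have : (q : ℝ) ≤ 2 * N / z := by
      rw [le_div_iff₀ hz0]
      exact_mod_cast hqz
    linarith [mul_div_assoc 2 (N : ℝ) z]
  calc _ ≤ ∑ d ∈ Ioc 0 z, log N ^ 2 * ‖((d * α : ℝ) : UnitAddCircle)‖⁻¹ := by
        refine norm_sum_le_of_le _ fun d hd ↦ ?_
        have hdz : (d : ℝ) ≤ z := Nat.cast_le.mpr (mem_Ioc.mp hd).2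
        have hγ := norm_natCast_mul_ne_zero hrq (hα.trans' (by gcongr)) (hndvd d hd)
        rw [norm_mul, ← one_mul (log N ^ 2 * _)]
        refine mul_le_mul (norm_moebius_le_one d) ?_ (norm_nonneg _) zero_le_one
        simp_rw [Nat.cast_mul, mul_comm (d : ℝ), mul_assoc]
        simp_rw [mul_comm _ α] at hγ ⊢
        refine (norm_sum_log_sq_mul_fourierChar_le hγ _).trans ?_
        gcongr ?_ ^ 2 * _
        exact monotone_log_natCast (Nat.div_le_self N d)
    _ = log N ^ 2 * ∑ d ∈ Ioc 0 z with ¬q ∣ d, ‖((d * α : ℝ) : UnitAddCircle)‖⁻¹ := by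
        rw [← mul_sum, filter_true_of_mem hndvd]
    _ ≤ (1 + log N) ^ 2 * (4 * (4 * (N / z)) * (2 * (1 + log N))) := by
        have hlogq := one_add_log_den_le hz hzN hqz
        gcongr
        · linarith
        · exact (sum_norm_mul_inv_le hrq hα).trans (by gcongr)
    _ = _ := by ring

theorem norm_sum_log_sq_mul_sum_moebius_le :
    ‖∑ m ∈ Ioc 0 z, ((log m ^ 2 : ℝ) : ℂ) * ∑ d ∈ Ioc z (N / m),
        ((μ d : ℝ) : ℂ) * 𝐞 ((m * d : ℕ) * α)‖ ≤ N * (log z ^ 2 * (1 + log z)) := by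
  calc _ ≤ ∑ m ∈ Ioc 0 z, log z ^ 2 * (N * (m : ℝ)⁻¹) := by
        refine norm_sum_le_of_le _ fun m hm ↦ ?_
        rw [norm_mul, Complex.norm_real, norm_of_nonneg (by positivity)]
        gcongr
        · exact_mod_cast (mem_Ioc.mp hm).1
        · exact (mem_Ioc.mp hm).2
        calc _ ≤ ∑ _ ∈ Ioc z (N / m), (1 : ℝ) := norm_sum_le_of_le _ fun d _ ↦ by
              rw [norm_mul, Circle.norm_coe, mul_one]
              simpa using norm_moebius_le_one d
          _ ≤ (N / m : ℕ) := by simp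
          _ ≤ _ := Nat.cast_div_le.trans_eq (div_eq_mul_inv _ _)
    _ ≤ _ := by
        rw [← mul_sum, ← mul_sum, mul_left_comm]
        gcongr
        exact sum_Ioc_inv_le z

theorem norm_sum_sum_moebius_log_sq_minorArc_le (hrq : IsCoprime r q) (hz : z ≠ 0)
    (hzN : z ^ 2 ≤ N) (hzq : z < q) (hqz : q * z ≤ 2 * N)
    (hα : 2 * (N / z : ℕ) * |q * α - r| ≤ 1) :
    ‖∑ d ∈ Ioc 0 N, (μ d : ℂ) * ∑ m ∈ Ioc 0 (N / d),
        (log m ^ 2 : ℝ) * (𝐞 ((d * m : ℕ) * α) : ℂ)‖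
      ≤ N * (log z ^ 2 * (1 + log z)) + 40 * (1 + log N) ^ 4 * (N / √z) := by
  have hzH : z ≤ N / z := (Nat.le_div_iff_mul_le (by lia)).mpr (by rwa [← sq])
  have hL := log_natCast_nonneg N
  have hsmall : ‖∑ d ∈ Ioc 0 z, (μ d : ℂ) * ∑ m ∈ Ioc 0 (N / d),
      (log m ^ 2 : ℝ) * (𝐞 ((d * m : ℕ) * α) : ℂ)‖ ≤ 32 * (1 + log N) ^ 4 * (N / √z) := by
    refine (norm_sum_moebius_log_sq_le_of_lt_den hrq hz hzN hzq hqz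
      (hα.trans' (by gcongr))).trans ?_
    have hz1 : (1 : ℝ) ≤ z := Nat.one_le_cast.mpr (by lia)
    gcongr
    · linarith
    · norm_num
    · exact sqrt_le_left (by positivity) |>.mpr (by nlinarith)
  have htail := norm_sum_Ioc_sum_mul_fourierChar_le_add hrq hz hzN hzq.le hqz hα
    (f := fun d ↦ μ d) (g := fun m ↦ log m ^ 2) (F := 1) (G := log N ^ 2)
    (fun d _ ↦ by exact_mod_cast ArithmeticFunction.abs_moebius_le_one)
    (fun m hm ↦ by
      rw [abs_of_nonneg (sq_nonneg _)]
      gcongr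
      · exact_mod_cast Nat.zero_lt_of_lt (mem_Ioc.mp hm).1
      · exact (mem_Ioc.mp hm).2.trans (Nat.div_le_self N z)) zero_le_one (sq_nonneg _)
  have hlog : 8 * (1 * log N ^ 2) * (1 + log N) ^ 2 * (N / √z)
      ≤ 8 * (1 + log N) ^ 4 * (N / √z) := by
    calc _ ≤ 8 * (1 * (1 + log N) ^ 2) * (1 + log N) ^ 2 * (N / √z) := by
          gcongr
          linarith
      _ = _ := by ring
  rw [← sum_Ioc_consecutive _ z.zero_le (show z ≤ N by nlinarith)]
  refine (norm_add_le _ _).trans ?_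
  simp only [Complex.ofReal_intCast] at htail
  have := norm_sum_log_sq_mul_sum_moebius_le (N := N) (z := z) (α := α)
  simp only [Complex.ofReal_intCast] at this
  linarith

theorem norm_vonMangoldtLogSum_minorArc_le (hrq : IsCoprime r q) (hz : z ≠ 0)
    (hzN : z ^ 2 ≤ N) (hzq : z < q) (hqz : q * z ≤ 2 * N)
    (hα : 2 * (N / z : ℕ) * |q * α - r| ≤ 1) :
    ‖vonMangoldtLogSum N α‖ ≤ 48 * (1 + log N) ^ 4 * (N / √z) + 73 * N * (1 + log z) ^ 3 := by
  rw [vonMangoldtLogSum_eq]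
  have hI := norm_sum_sum_moebius_log_sq_minorArc_le hrq hz hzN hzq hqz hα
  have hII := norm_sum_sum_vonMangoldt_minorArc_le hrq hz hzN hzq.le hqz hα
  have hlog : N * (log z ^ 2 * (1 + log z)) + 12 * N * (log z + 6)
      ≤ 73 * N * (1 + log z) ^ 3 := by
    have := log_natCast_nonneg z
    have : log z ^ 2 * (1 + log z) + 12 * (log z + 6) ≤ 73 * (1 + log z) ^ 3 := by
      nlinarith [pow_nonneg this 2, pow_nonneg this 3]
    nlinarith [N.cast_nonneg (α := ℝ)]
  refine (norm_sub_le _ _).trans ((add_le_add hI hII).trans ?_)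
  linarith

end MinorArcs

section ChoiceOfLength

open Filter Topology Asymptotics

variable {z N : ℕ} {α : ℝ}

/-- `α` is exceptional at length `N` with respect to the cut `z` if it has a rational approximation
`ρ` with denominator at most `z` that is as good as Dirichlet's theorem provides, but not good
enough to compare the exponential sums of length `N` at `α` and at `ρ`. -/
def IsExceptional (z N : ℕ) (α : ℝ) : Prop :=
  ∃ ρ : ℚ, ρ.den ≤ z ∧ 1 < N * log N * |ρ.den * α - ρ.num| ∧
    2 * (N / z : ℕ) * |ρ.den * α - ρ.num| ≤ 1

theorem exists_rat_den_mul_le (hzN : z ≤ N) (hz : z ≠ 0) (α : ℝ) :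
    ∃ ρ : ℚ, ρ.den * z ≤ 2 * N ∧ 2 * (N / z : ℕ) * |ρ.den * α - ρ.num| ≤ 1 := by
  have hpos : 0 < 2 * (N / z) := by
    have := Nat.div_pos hzN (by lia)
    lia
  obtain ⟨ρ, hρ, hden⟩ := exists_rat_abs_sub_le_and_den_le α hpos
  refine ⟨ρ, (Nat.mul_le_mul_right z hden).trans ?_, ?_⟩
  · rw [mul_assoc]
    exact Nat.mul_le_mul_left 2 (Nat.div_mul_le_self N z)
  · have hq : (0 : ℝ) < ρ.den := Nat.cast_pos.mpr ρ.den_pos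
    have herr : |ρ.den * α - ρ.num| = ρ.den * |α - ρ| := by
      rw [← abs_of_pos hq, ← abs_mul, abs_of_pos hq, mul_sub]
      congr 2
      exact_mod_cast (Rat.den_mul_eq_num ρ).symm
    rw [herr]
    obtain ⟨m, hm⟩ : ∃ m, N / z = m := ⟨_, rfl⟩
    rw [hm] at hρ ⊢
    calc 2 * (m : ℝ) * (ρ.den * |α - ρ|)
        ≤ 2 * m * (ρ.den * (1 / (((2 * m : ℕ) + 1) * ρ.den))) := by gcongr
      _ = 2 * m / (2 * m + 1) := by
          push_cast
          field_simp
      _ ≤ 1 := div_le_one_of_le₀ (by linarith) (by positivity)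

theorem norm_vonMangoldtLogSum_le_or (hz : z ≠ 0) (hzN : z ^ 2 ≤ N) (α : ℝ) :
    ‖vonMangoldtLogSum N α‖ ≤ 48 * (1 + log N) ^ 4 * (N / √z) + 73 * N * (1 + log z) ^ 3 ∨
      (∃ ρ : ℚ, ρ.den ≤ z ∧ N * log N * |ρ.den * α - ρ.num| ≤ 1) ∨ IsExceptional z N α := by
  obtain ⟨ρ, hρz, hρ⟩ := exists_rat_den_mul_le ((Nat.le_self_pow two_ne_zero z).trans hzN) hz α
  have : NeZero ρ.den := ⟨ρ.den_nz⟩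
  rcases lt_or_ge z ρ.den with hlt | hle
  · exact .inl (norm_vonMangoldtLogSum_minorArc_le (Rat.isCoprime_num_den ρ) hz hzN hlt hρz hρ)
  · rcases le_or_gt (N * log N * |ρ.den * α - ρ.num|) 1 with h | h
    exacts [.inr (.inl ⟨ρ, hle, h⟩), .inr (.inr ⟨ρ, hle, h, hρ⟩)]

theorem rat_eq_of_abs_den_mul_sub_lt {ρ σ : ℚ}
    (h : σ.den * |ρ.den * α - ρ.num| + ρ.den * |σ.den * α - σ.num| < 1) : ρ = σ := by
  rw [Rat.eq_iff_mul_eq_mul, ← sub_eq_zero, ← Int.abs_lt_one_iff]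
  rify
  refine lt_of_le_of_lt ?_ h
  calc |(ρ.num : ℝ) * σ.den - σ.num * ρ.den|
      = |ρ.den * (σ.den * α - σ.num) - σ.den * (ρ.den * α - ρ.num)| := by ring_nf
    _ ≤ |ρ.den * (σ.den * α - σ.num)| + |σ.den * (ρ.den * α - ρ.num)| := abs_sub _ _
    _ = _ := by
        rw [abs_mul, abs_mul, Nat.abs_cast, Nat.abs_cast, add_comm]

theorem IsExceptional.not_of_mul_sq_le {N' : ℕ} (h : IsExceptional z N α) (hzN : 2 * z ^ 2 ≤ N)
    (hlog : log N ≤ z) (hN' : N * z ^ 2 ≤ N') : ¬IsExceptional z N' α := by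
  rintro ⟨σ, hσz, -, hσ⟩
  obtain ⟨ρ, hρz, hρ1, hρ⟩ := h
  have hz : 0 < z := ρ.den_pos.trans_le hρz
  have hdiv : N * z ≤ N' / z := (Nat.le_div_iff_mul_le hz).mpr (by linarith)
  have hNdiv : 2 * z ≤ N / z := (Nat.le_div_iff_mul_le hz).mpr (by linarith)
  have hNN' : N / z ≤ N' / z :=
    Nat.div_le_div_right ((Nat.le_mul_of_pos_right N (by positivity)).trans hN')
  have hsmall (τ τ' : ℚ) (hτ' : τ'.den ≤ z) {M : ℕ} (hM : 2 * z ≤ M)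
      (hτ : 2 * M * |τ.den * α - τ.num| ≤ 1) : τ'.den * |τ.den * α - τ.num| ≤ 1 / 4 := by
    have : (2 * τ'.den : ℝ) ≤ M := by exact_mod_cast (Nat.mul_le_mul_left 2 hτ').trans hM
    nlinarith [abs_nonneg (τ.den * α - τ.num)]
  obtain rfl : ρ = σ := rat_eq_of_abs_den_mul_sub_lt (α := α) <| by
    linarith [hsmall ρ σ hσz hNdiv hρ, hsmall σ ρ hρz (hNdiv.trans hNN') hσ]
  have hlarge : N * log N ≤ (N' / z : ℕ) :=
    calc N * log N ≤ N * z := by gcongr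
      _ ≤ _ := by exact_mod_cast hdiv
  nlinarith [abs_nonneg (ρ.den * α - ρ.num)]

theorem exists_forall_rat_lt_den_of_irrational (hα : Irrational α) (Q : ℕ) :
    ∃ δ > 0, ∀ ρ : ℚ, |ρ.den * α - ρ.num| < δ → Q < ρ.den := by
  have hpos (q : ℕ) (hq : q ∈ Ioc 0 Q) : 0 < ‖((q * α : ℝ) : UnitAddCircle)‖ := by
    rw [norm_pos_iff, Ne, AddCircle.coe_eq_zero_iff]
    rintro ⟨r, hr⟩
    rw [zsmul_one] at hr
    exact (hα.natCast_mul (mem_Ioc.mp hq).1.ne').ne_int r hr.symm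
  obtain ⟨δ, hle, hδ⟩ := (((eventually_all_finset _).mpr fun q hq ↦
    eventually_le_nhds (hpos q hq)).filter_mono nhdsWithin_le_nhds |>.and
      (self_mem_nhdsWithin (s := Set.Ioi 0))).exists
  refine ⟨δ, hδ, fun ρ hρ ↦ ?_⟩
  by_contra! hQ
  have := hle ρ.den (mem_Ioc.mpr ⟨ρ.den_pos, hQ⟩)
  rw [UnitAddCircle.norm_eq] at this
  linarith [round_le (ρ.den * α) ρ.num]

/-- The denominator `⌈J log X⌉ ^ 8` separating major from minor arcs at all lengths in `[X, X ^ J]`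
simultaneously. -/
noncomputable def minorArcCut (J X : ℕ) : ℕ := ⌈J * log X⌉₊ ^ 8

theorem tendsto_log_natCast_atTop : Tendsto (fun n : ℕ ↦ log n) atTop atTop :=
  tendsto_log_atTop.comp tendsto_natCast_atTop_atTop

theorem eventually_natCeil_mul_log_le {J : ℕ} (hJ : J ≠ 0) :
    ∀ᶠ X : ℕ in atTop, (⌈J * log X⌉₊ : ℝ) ≤ 2 * (J * log X) := by
  filter_upwards [tendsto_log_natCast_atTop.eventually_ge_atTop 1] with X hX
  refine Nat.ceil_le_two_mul ?_
  have : (1 : ℝ) ≤ J := Nat.one_le_cast.mpr (by lia)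
  norm_num
  nlinarith

theorem eventually_minorArcCut_pow_le {J : ℕ} (hJ : J ≠ 0) :
    ∀ᶠ X : ℕ in atTop, 2 * minorArcCut J X ^ 4 ≤ X := by
  have hc : (0 : ℝ) < (2 * (2 * (J : ℝ)) ^ 32)⁻¹ := by positivity
  filter_upwards [eventually_natCeil_mul_log_le hJ, tendsto_natCast_atTop_atTop.eventually
    (isLittleO_pow_log_id_atTop (n := 32) |>.def hc)] with X hX hlog
  rw [norm_of_nonneg (by positivity), id, RCLike.norm_natCast, inv_mul_eq_div,
    le_div_iff₀ (by positivity)] at hlog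
  suffices (2 * minorArcCut J X ^ 4 : ℝ) ≤ X by exact_mod_cast this
  calc (2 * minorArcCut J X ^ 4 : ℝ) = 2 * (⌈J * log X⌉₊ : ℝ) ^ 32 := by
        rw [minorArcCut, Nat.cast_pow, ← pow_mul]
    _ ≤ 2 * (2 * (J * log X)) ^ 32 := by gcongr
    _ = log X ^ 32 * (2 * (2 * J) ^ 32) := by ring
    _ ≤ X := hlog

theorem eventually_one_add_log_minorArcCut_le {J : ℕ} (hJ : J ≠ 0) {c : ℝ} (hc : 0 < c) :
    ∀ᶠ X : ℕ in atTop, (1 + log (minorArcCut J X)) ^ 3 ≤ c * log X := by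
  have hJ0 : (0 : ℝ) < J := by positivity
  have hceil : Tendsto (fun X : ℕ ↦ (⌈J * log X⌉₊ : ℝ)) atTop atTop :=
    tendsto_natCast_atTop_atTop.comp
      (tendsto_nat_ceil_atTop.comp (tendsto_log_natCast_atTop.const_mul_atTop hJ0))
  have hc' : 0 < c / (9 ^ 3 * (2 * J)) := by positivity
  filter_upwards [eventually_natCeil_mul_log_le hJ,
    hceil.eventually (isLittleO_pow_log_id_atTop (n := 3) |>.def hc'),
    (tendsto_log_atTop.comp hceil).eventually_ge_atTop 1] with X hX hlog hlog1
  rw [Function.comp_apply] at hlog1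
  rw [norm_of_nonneg (by positivity), id, RCLike.norm_natCast] at hlog
  calc (1 + log (minorArcCut J X)) ^ 3 = (1 + 8 * log ⌈J * log X⌉₊) ^ 3 := by
        rw [minorArcCut, Nat.cast_pow, log_pow]
        norm_num
    _ ≤ (9 * log ⌈J * log X⌉₊) ^ 3 := by
        gcongr
        linarith
    _ ≤ 9 ^ 3 * (c / (9 ^ 3 * (2 * J)) * (2 * (J * log X))) := by
        rw [mul_pow]
        gcongr
        exact hlog.trans (by gcongr)
    _ = c * log X := by field_simp

theorem log_le_natCeil_mul_log {J X : ℕ} (hN : N ≤ X ^ J) :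
    log N ≤ ⌈J * log X⌉₊ :=
  calc log N ≤ log (X ^ J : ℕ) := monotone_log_natCast hN
    _ = J * log X := by rw [Nat.cast_pow, log_pow]
    _ ≤ _ := Nat.le_ceil _

theorem eventually_minorArc_bound_le {J : ℕ} (hJ : J ≠ 0) {η : ℝ} (hη : 0 < η) :
    ∀ᶠ X : ℕ in atTop, ∀ N, X ≤ N → N ≤ X ^ J →
      48 * (1 + log N) ^ 4 * (N / √(minorArcCut J X))
        + 73 * N * (1 + log (minorArcCut J X)) ^ 3 ≤ η * (N * log N) := by
  have hc : 0 < η / 146 := by positivity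
  filter_upwards [eventually_one_add_log_minorArcCut_le hJ hc,
    tendsto_log_natCast_atTop.eventually_ge_atTop (max 1 (1536 / η))] with X hcut hlog N hXN hNX
  have hXNlog : log X ≤ log N := monotone_log_natCast hXN
  obtain ⟨hlog1, hlogη⟩ := max_le_iff.mp hlog
  have hy := log_le_natCeil_mul_log hNX
  have hsqrt : √(minorArcCut J X) = (⌈J * log X⌉₊ : ℝ) ^ 4 := by
    rw [minorArcCut, Nat.cast_pow, show 8 = 4 * 2 by rfl, pow_mul, sqrt_sq (by positivity)]
  have hy0 : (0 : ℝ) < ⌈J * log X⌉₊ := by linarith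
  have hmain : 48 * (1 + log N) ^ 4 * (N / √(minorArcCut J X)) ≤ 768 * N :=
    calc _ ≤ 48 * (2 * (⌈J * log X⌉₊ : ℝ)) ^ 4 * (N / (⌈J * log X⌉₊ : ℝ) ^ 4) := by
          rw [hsqrt]
          have : 0 ≤ log N := log_natCast_nonneg N
          gcongr
          linarith
      _ = _ := by
          field_simp
          ring
  have hlogN : 1536 ≤ η * log N := by
    rw [div_le_iff₀ hη] at hlogη
    nlinarith
  calc _ ≤ 768 * N + 73 * N * (η / 146 * log N) :=
        add_le_add hmain (by gcongr; exact hcut.trans (by gcongr))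
    _ = N * (768 + η * log N / 2) := by ring
    _ ≤ N * (η * log N) := by
        gcongr
        linarith
    _ = _ := by ring

theorem eventually_one_add_log_sq_div_sqrt_le {c : ℝ} (hc : 0 < c) :
    ∀ᶠ q : ℕ in atTop, (1 + log q) ^ 2 / √q ≤ c := by
  have hsqrt : Tendsto (fun q : ℕ ↦ √(q : ℝ)) atTop atTop :=
    tendsto_sqrt_atTop.comp tendsto_natCast_atTop_atTop
  filter_upwards [hsqrt.eventually (isLittleO_pow_log_id_atTop (n := 2) |>.def
      (show 0 < c / 16 by positivity)), tendsto_log_natCast_atTop.eventually_ge_atTop 1]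
    with q hq hlog
  rw [norm_of_nonneg (by positivity), id, norm_of_nonneg (sqrt_nonneg _),
    log_sqrt q.cast_nonneg] at hq
  refine div_le_of_le_mul₀ (sqrt_nonneg _) hc.le ?_
  calc (1 + log q) ^ 2 ≤ (2 * log q) ^ 2 := by
        gcongr
        linarith
    _ = 16 * (log q / 2) ^ 2 := by ring
    _ ≤ c * √q := by linarith

theorem eventually_norm_vonMangoldtLogSum_le_of_near_rat {J : ℕ} (hJ : J ≠ 0)
    (hα : Irrational α) {η : ℝ} (hη : 0 < η) :
    ∀ᶠ X : ℕ in atTop, ∀ N ≥ X, ∀ ρ : ℚ, ρ.den ≤ minorArcCut J X →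
      N * log N * |ρ.den * α - ρ.num| ≤ 1 → ‖vonMangoldtLogSum N α‖ ≤ η * (N * log N) := by
  obtain ⟨Q, hQ⟩ := eventually_atTop.mp
    (eventually_one_add_log_sq_div_sqrt_le (show 0 < η / 1008 by positivity))
  obtain ⟨δ, hδ, hδQ⟩ := exists_forall_rat_lt_den_of_irrational hα (max Q 2)
  have hc : 0 < η / 456 := by positivity
  filter_upwards [eventually_one_add_log_minorArcCut_le hJ hc, eventually_minorArcCut_pow_le hJ,
    tendsto_log_natCast_atTop.eventually_ge_atTop 1,
    tendsto_natCast_atTop_atTop.eventually_gt_atTop δ⁻¹] with X hcut hpow hlog hX N hXN ρ hρz hρ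
  have hXN' : (X : ℝ) ≤ N := Nat.cast_le.mpr hXN
  have hXNlog : log X ≤ log N := monotone_log_natCast hXN
  have hqQ : max Q 2 < ρ.den := hδQ ρ <| by
    have : 1 < δ * X := by rwa [inv_lt_iff_one_lt_mul₀' hδ] at hX
    by_contra! hle
    have : δ * X * 1 ≤ |ρ.den * α - ρ.num| * N * log N := by
      gcongr
      exact hlog.trans hXNlog
    linarith
  obtain ⟨hQq, hq2⟩ := max_lt_iff.mp hqQ
  have : NeZero ρ.den := ⟨ρ.den_nz⟩
  have hbound := norm_vonMangoldtLogSum_le_of_near_rational (Rat.isCoprime_num_den ρ) hq2.le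
    (((Nat.mul_le_mul_left 2 (Nat.pow_le_pow_left hρz 4)).trans hpow).trans hXN) hρ
  have hlogq : 1 + log ρ.den ≤ η / 456 * log N := by
    have hle : log ρ.den ≤ log (minorArcCut J X) := monotone_log_natCast hρz
    calc 1 + log ρ.den ≤ 1 + log (minorArcCut J X) := by gcongr
      _ ≤ (1 + log (minorArcCut J X)) ^ 3 :=
          le_self_pow₀ (by linarith [log_natCast_nonneg (minorArcCut J X)]) three_ne_zero
      _ ≤ _ := hcut.trans (by gcongr)
  calc ‖vonMangoldtLogSum N α‖
      ≤ N * (252 * ((1 + log ρ.den) ^ 2 / √ρ.den)) * (1 + log N)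
        + 228 * N * (1 + log ρ.den) := hbound.trans_eq (by ring)
    _ ≤ N * (η / 4) * (2 * log N) + 228 * N * (η / 456 * log N) := by
        gcongr
        · linarith [hQ _ hQq.le]
        · linarith
    _ = _ := by ring

theorem exists_forall_not_isExceptional (A : Finset ℝ) {X : ℕ} (hzX : 2 * z ^ 2 ≤ X)
    (hX : X ≠ 0) (hlog : log (X ^ (#A + 1) : ℕ) ≤ z) :
    ∃ i ∈ range (#A + 1), ∀ α ∈ A, ¬IsExceptional z (X ^ (i + 1)) α := by
  by_contra! hbad
  choose! α hαA hα using hbad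
  obtain ⟨i, hi, j, hj, hne, heq⟩ := exists_ne_map_eq_of_card_lt_of_maps_to
    (s := range (#A + 1)) (t := A) (by simp) (f := α) hαA
  wlog hij : i < j generalizing i j
  · exact this j hj i hi hne.symm heq.symm (hne.lt_or_gt.resolve_left hij)
  refine (hα i hi).not_of_mul_sq_le (hzX.trans (Nat.le_self_pow (by lia) X)) ?_ ?_ (heq ▸ hα j hj)
  · refine (monotone_log_natCast (Nat.pow_le_pow_right (Nat.pos_of_ne_zero hX) ?_)).trans hlog
    have := mem_range.mp hi
    lia
  · calc X ^ (i + 1) * z ^ 2 ≤ X ^ (i + 1) * X := by gcongr; lia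
      _ = X ^ (i + 2) := (pow_succ X (i + 1)).symm
      _ ≤ _ := Nat.pow_le_pow_right (Nat.pos_of_ne_zero hX) (by lia)

theorem frequently_forall_norm_vonMangoldtLogSum_le {A : Finset ℝ} (hA : ∀ α ∈ A, Irrational α)
    {η : ℝ} (hη : 0 < η) :
    ∃ᶠ N in atTop, ∀ α ∈ A, ‖vonMangoldtLogSum N α‖ ≤ η * (N * log N) := by
  have hJ : #A + 1 ≠ 0 := by lia
  refine frequently_atTop.mpr fun M ↦ ?_
  obtain ⟨X, hminor, hmajor, hpow, hX, hXM⟩ := ((eventually_minorArc_bound_le hJ hη).and <|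
    ((eventually_all_finset A).mpr fun α hα ↦
      eventually_norm_vonMangoldtLogSum_le_of_near_rat hJ (hA α hα) hη).and <|
    (eventually_minorArcCut_pow_le hJ).and <|
    (eventually_ge_atTop 2).and (eventually_ge_atTop M)).exists
  have hz : minorArcCut (#A + 1) X ≠ 0 := by
    have : 0 < log X := log_pos (by exact_mod_cast hX)
    unfold minorArcCut
    positivity
  have hzX : 2 * minorArcCut (#A + 1) X ^ 2 ≤ X :=
    (Nat.mul_le_mul_left 2 (Nat.pow_le_pow_right (Nat.pos_of_ne_zero hz) (by lia))).trans hpow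
  have hlog : log (X ^ (#A + 1) : ℕ) ≤ minorArcCut (#A + 1) X :=
    (log_le_natCeil_mul_log le_rfl).trans (Nat.cast_le.mpr (Nat.le_self_pow (by lia) _))
  obtain ⟨i, hi, hgood⟩ := exists_forall_not_isExceptional A hzX (by lia) hlog
  have hXN : X ≤ X ^ (i + 1) := Nat.le_self_pow (by lia) X
  have hNX : X ^ (i + 1) ≤ X ^ (#A + 1) := Nat.pow_le_pow_right (by lia) (mem_range.mp hi)
  refine ⟨X ^ (i + 1), hXM.trans hXN, fun α hα ↦ ?_⟩
  rcases norm_vonMangoldtLogSum_le_or (N := X ^ (i + 1)) hz (by lia) α with h | ⟨ρ, hρz, hρ⟩ | h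
  · exact h.trans (hminor _ hXN hNX)
  · exact hmajor α hα _ hXN ρ hρz hρ
  · exact absurd h (hgood α hα)

end ChoiceOfLength

section WeightedPrimeCount

open Filter Asymptotics
open ArithmeticFunction (vonMangoldt_nonneg)

theorem log_mul_psi_sub_le (N : ℕ) :
    log N / 2 * (Chebyshev.psi N - Chebyshev.psi N.sqrt) ≤ ∑ n ∈ Ioc 0 N, Λ n * log n := by
  have hlog : ∀ n ∈ Ioc N.sqrt N, log N / 2 ≤ log n := by
    intro n hn
    have h : N ≤ n ^ 2 := by
      rw [sq]
      exact (Nat.sqrt_lt.mp (mem_Ioc.mp hn).1).le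
    have := monotone_log_natCast h
    simp only [Nat.cast_pow, log_pow] at this
    push_cast at this
    linarith
  rw [chebyshevPsi_natCast_eq, chebyshevPsi_natCast_eq,
    ← sum_Ioc_consecutive _ N.sqrt.zero_le N.sqrt_le_self, add_sub_cancel_left, mul_sum,
    ← sum_Ioc_consecutive (fun n ↦ Λ n * log n) N.sqrt.zero_le N.sqrt_le_self]
  calc _ ≤ ∑ n ∈ Ioc N.sqrt N, Λ n * log n := sum_le_sum fun n hn ↦ by
        rw [mul_comm]
        gcongr
        exact hlog n hn
    _ ≤ _ := le_add_of_nonneg_left (sum_nonneg fun n _ ↦ by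
        have : 0 ≤ Λ n := vonMangoldt_nonneg
        positivity)

theorem chebyshevPsi_sub_sqrt_ge {N : ℕ} (hN : 400 ≤ N) :
    N / 4 ≤ Chebyshev.psi N - Chebyshev.psi N.sqrt := by
  have hN' : (400 : ℝ) ≤ N := by exact_mod_cast hN
  have hsqrt : 20 ≤ √N := le_sqrt_of_sq_le (by linarith)
  have hsq : √N * √N = N := mul_self_sqrt N.cast_nonneg
  have hlog : log (N + 1) ≤ 2 * √N := by
    have h : √(N + 1) ≤ √N + 1 := sqrt_le_iff.mpr ⟨by positivity, by linarith⟩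
    calc log (N + 1) = 2 * log √(N + 1) := by
          rw [log_sqrt (by positivity)]
          ring
      _ ≤ 2 * (√(N + 1) - 1) := by
          gcongr
          exact log_le_sub_one_of_pos (by positivity)
      _ ≤ 2 * √N := by linarith
  have hpsi : Chebyshev.psi N.sqrt ≤ 6 * √N := by
    rw [chebyshevPsi_natCast_eq]
    refine (sum_vonMangoldt_le _).trans ?_
    gcongr
    exact nat_sqrt_le_real_sqrt
  have hpsi_ge := Chebyshev.psi_ge N
  have hlog2 := log_two_gt_d9
  nlinarith

theorem isBigO_natCast_mul_log_sum_vonMangoldt_mul_log :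
    (fun N : ℕ ↦ N * log N) =O[atTop] fun N ↦ ∑ n ∈ Ioc 0 N, Λ n * log n := by
  refine .of_bound 8 ?_
  filter_upwards [eventually_ge_atTop 400] with N hN
  have hpsi := chebyshevPsi_sub_sqrt_ge hN
  rw [norm_of_nonneg (by positivity)]
  calc N * log N = 8 * (log N / 2 * (N / 4)) := by ring
    _ ≤ 8 * (log N / 2 * (Chebyshev.psi N - Chebyshev.psi N.sqrt)) := by gcongr
    _ ≤ 8 * ‖_‖ := by
      gcongr
      exact (log_mul_psi_sub_le N).trans (le_norm_self _)

theorem sum_vonMangoldt_mul_log_not_prime_le (N : ℕ) :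
    ∑ n ∈ Ioc 0 N with ¬n.Prime, Λ n * log n ≤ 2 * √N * log N * log N := by
  rcases N.eq_zero_or_pos with rfl | hN
  · simp
  have h := Chebyshev.psi_sub_theta_le (x := N) (by exact_mod_cast hN)
  rw [Chebyshev.psi_sub_theta_eq_sum_not_prime, Nat.floor_natCast] at h
  calc ∑ n ∈ Ioc 0 N with ¬n.Prime, Λ n * log n
      ≤ ∑ n ∈ Ioc 0 N with ¬n.Prime, Λ n * log N := by
        refine sum_le_sum fun n hn ↦ mul_le_mul_of_nonneg_left ?_ vonMangoldt_nonneg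
        exact monotone_log_natCast (mem_Ioc.mp (mem_filter.mp hn).1).2
    _ ≤ _ := by
        rw [← sum_mul]
        gcongr

theorem isLittleO_sum_vonMangoldt_mul_log_not_prime :
    (fun N : ℕ ↦ ∑ n ∈ Ioc 0 N with ¬n.Prime, Λ n * log n) =o[atTop]
      fun N ↦ N * log N := by
  have hlog : (fun N : ℕ ↦ log N) =o[atTop] fun N : ℕ ↦ √N := by
    simpa only [sqrt_eq_rpow, Function.comp_def] using
      (isLittleO_log_rpow_atTop one_half_pos).comp_tendsto tendsto_natCast_atTop_atTop
  have hmul := (hlog.mul_isBigO (isBigO_refl (fun N : ℕ ↦ √N * log N) atTop)).const_mul_left 2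
  refine ((IsBigO.of_norm_le fun N ↦ ?_).trans_isLittleO hmul).congr_right fun N ↦ ?_
  · rw [norm_of_nonneg (sum_nonneg fun n _ ↦ by have : 0 ≤ Λ n := vonMangoldt_nonneg; positivity)]
    exact (sum_vonMangoldt_mul_log_not_prime_le N).trans_eq (by ring)
  · rw [← mul_assoc, mul_self_sqrt N.cast_nonneg]

end WeightedPrimeCount

section TorusCharacters

open MeasureTheory

variable {d : Type*} [Fintype d]

instance isProbabilityMeasure_volume_unitAddTorus :
    IsProbabilityMeasure (volume : Measure (UnitAddTorus d)) :=
  ⟨by rw [volume_pi, Measure.pi_univ, prod_eq_one fun _ _ ↦ UnitAddCircle.measure_univ]⟩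

theorem norm_integral_unitAddTorus_le (f : C(UnitAddTorus d, ℂ)) : ‖∫ u, f u‖ ≤ ‖f‖ := by
  simpa using norm_integral_le_of_norm_le_const (μ := volume) (.of_forall f.norm_coe_le_norm)

theorem integral_mFourier_eq_zero {h : d → ℤ} {t : UnitAddTorus d}
    (ht : UnitAddTorus.mFourier h t ≠ 1) : ∫ u, UnitAddTorus.mFourier h u = 0 := by
  have hadd (u) : UnitAddTorus.mFourier h (u + t) =
      UnitAddTorus.mFourier h u * UnitAddTorus.mFourier h t := by
    simp [UnitAddTorus.mFourier, AddCircle.toCircle_add, prod_mul_distrib]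
  have hinv := integral_add_right_eq_self (UnitAddTorus.mFourier h) t (μ := volume)
  simp only [hadd, integral_mul_const] at hinv
  exact (mul_right_eq_self₀.mp hinv).resolve_left ht

theorem mFourier_nsmul_coe (h : d → ℤ) (θ : d → ℝ) (n : ℕ) :
    UnitAddTorus.mFourier h (n • fun i ↦ (θ i : UnitAddCircle)) = 𝐞 (n * ∑ i, h i * θ i) := by
  simp only [UnitAddTorus.mFourier, ContinuousMap.coe_mk, Pi.smul_apply, ← AddCircle.coe_nsmul,
    fourier_coe_apply, ← Complex.exp_sum, fourierChar_apply]
  congr 1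
  push_cast
  simp only [mul_sum, sum_mul, nsmul_eq_mul]
  refine sum_congr rfl fun i _ ↦ ?_
  ring

end TorusCharacters

section Equidistribution

open Filter Topology Asymptotics MeasureTheory
open ArithmeticFunction (vonMangoldt_nonneg)

theorem exists_neBot_filter_forall_isLittleO_vonMangoldtLogSum :
    ∃ l : Filter ℕ, l.NeBot ∧ l ≤ atTop ∧
      ∀ α, Irrational α → (fun N ↦ vonMangoldtLogSum N α) =o[l] fun N : ℕ ↦ N * log N := by
  classical
  let S (i : Finset {α // Irrational α} × {η : ℝ // 0 < η}) : Set ℕ :=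
    {N | ∀ α ∈ i.1, ‖vonMangoldtLogSum N α‖ ≤ i.2 * (N * log N)}
  have hne (i) : (atTop ⊓ 𝓟 (S i)).NeBot := by
    rw [← frequently_mem_iff_neBot]
    refine (frequently_forall_norm_vonMangoldtLogSum_le (A := i.1.map (.subtype _)) ?_ i.2.2).mono
      fun N hN α hα ↦ hN α (mem_map_of_mem _ hα)
    exact fun α hα ↦ property_of_mem_map_subtype i.1 hα
  have hdir : Directed (· ≥ ·) fun i ↦ atTop ⊓ 𝓟 (S i) := by
    refine fun i j ↦ ⟨(i.1 ∪ j.1, min i.2 j.2), ?_, ?_⟩ <;>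
      refine inf_le_inf_left _ (principal_mono.mpr fun N hN α hα ↦ ?_)
    · refine (hN α (mem_union_left _ hα)).trans ?_
      gcongr
      exact min_le_left i.2 j.2
    · refine (hN α (mem_union_right _ hα)).trans ?_
      gcongr
      exact min_le_right i.2 j.2
  have : Nonempty (Finset {α // Irrational α} × {η : ℝ // 0 < η}) := ⟨∅, 1, one_pos⟩
  refine ⟨_, iInf_neBot_of_directed' hdir hne, iInf_le_of_le this.some inf_le_left, ?_⟩
  refine fun α hα ↦ .of_bound fun η hη ↦ ?_
  refine mem_iInf_of_mem ({⟨α, hα⟩}, ⟨η, hη⟩) (mem_inf_of_right fun N hN ↦ ?_)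
  exact (hN ⟨α, hα⟩ (mem_singleton_self _)).trans (by gcongr; exact le_norm_self _)

variable {d : Type*} [Fintype d]

/-- The discrepancy between the sum of `f` over the points `n • t`, `1 ≤ n ≤ N`, weighted by
`Λ(n) log n`, and its expected value. -/
noncomputable def torusDiscrepancy (t : UnitAddTorus d) (f : C(UnitAddTorus d, ℂ)) (N : ℕ) : ℂ :=
  ∑ n ∈ Ioc 0 N, (Λ n * log n : ℝ) * (f (n • t) - ∫ u, f u)

variable {t : UnitAddTorus d} {θ : d → ℝ} {l : Filter ℕ}

theorem torusDiscrepancy_add (t : UnitAddTorus d) (f g : C(UnitAddTorus d, ℂ)) (N : ℕ) :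
    torusDiscrepancy t (f + g) N = torusDiscrepancy t f N + torusDiscrepancy t g N := by
  have hint : ∫ u, (f u + g u) = (∫ u, f u) + ∫ u, g u := by
    exact integral_add (f.continuous.integrable_of_hasCompactSupport (.of_compactSpace _))
      (g.continuous.integrable_of_hasCompactSupport (.of_compactSpace _))
  simp only [torusDiscrepancy, ContinuousMap.add_apply, hint, ← sum_add_distrib]
  exact sum_congr rfl fun n _ ↦ by ring

theorem torusDiscrepancy_smul (t : UnitAddTorus d) (c : ℂ) (f : C(UnitAddTorus d, ℂ)) (N : ℕ) :
    torusDiscrepancy t (c • f) N = c * torusDiscrepancy t f N := by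
  simp only [torusDiscrepancy, ContinuousMap.smul_apply, smul_eq_mul, integral_const_mul, mul_sum]
  exact sum_congr rfl fun n _ ↦ by ring

theorem norm_torusDiscrepancy_le (t : UnitAddTorus d) (f : C(UnitAddTorus d, ℂ)) (N : ℕ) :
    ‖torusDiscrepancy t f N‖ ≤ 12 * ‖f‖ * (N * log N) := by
  calc ‖torusDiscrepancy t f N‖
      ≤ ∑ n ∈ Ioc 0 N, Λ n * log n * (‖f‖ + ‖f‖) := by
        refine norm_sum_le_of_le _ fun n _ ↦ ?_
        have : 0 ≤ Λ n := vonMangoldt_nonneg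
        rw [norm_mul, Complex.norm_real, norm_of_nonneg (by positivity)]
        gcongr
        exact norm_sub_le_of_le (f.norm_coe_le_norm _) (norm_integral_unitAddTorus_le f)
    _ ≤ 6 * N * log N * (‖f‖ + ‖f‖) := by
        rw [← sum_mul]
        gcongr
        exact sum_vonMangoldt_mul_log_le N
    _ = _ := by ring

theorem fourierChar_ne_one {x : ℝ} (hx : Irrational x) : (𝐞 x : ℂ) ≠ 1 := by
  rw [fourierChar_apply, Ne, Complex.exp_eq_one_iff]
  rintro ⟨n, hn⟩
  have h : ((2 * π * x : ℝ) : ℂ) = (n * (2 * π) : ℝ) := by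
    refine mul_right_cancel₀ Complex.I_ne_zero (hn.trans ?_)
    push_cast
    ring
  refine hx.ne_int n (mul_left_cancel₀ two_pi_pos.ne' ?_)
  rw [Complex.ofReal_injective h, mul_comm]

theorem torusDiscrepancy_mFourier_isLittleO
    (hl : ∀ α, Irrational α → (fun N ↦ vonMangoldtLogSum N α) =o[l] fun N : ℕ ↦ N * log N)
    (hθ : ∀ h : d → ℤ, h ≠ 0 → Irrational (∑ i, h i * θ i)) (h : d → ℤ) :
    torusDiscrepancy (fun i ↦ (θ i : UnitAddCircle)) (UnitAddTorus.mFourier h) =o[l]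
      fun N ↦ N * log N := by
  rcases eq_or_ne h 0 with rfl | hh
  · have : torusDiscrepancy (fun i ↦ (θ i : UnitAddCircle)) (UnitAddTorus.mFourier 0) = 0 := by
      ext N
      simp [torusDiscrepancy, UnitAddTorus.mFourier_zero]
    rw [this]
    exact isLittleO_zero _ _
  have hne : UnitAddTorus.mFourier h (fun i ↦ (θ i : UnitAddCircle)) ≠ 1 := by
    have := mFourier_nsmul_coe h θ 1
    rw [one_smul, Nat.cast_one, one_mul] at this
    rw [this]
    exact fourierChar_ne_one (hθ h hh)
  refine (hl _ (hθ h hh)).congr_left fun N ↦ ?_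
  simp [torusDiscrepancy, vonMangoldtLogSum, integral_mFourier_eq_zero hne, mFourier_nsmul_coe]

theorem torusDiscrepancy_isLittleO_of_mem_closure {s : Set C(UnitAddTorus d, ℂ)}
    (hs : ∀ f ∈ s, torusDiscrepancy t f =o[l] fun N ↦ N * log N) {f : C(UnitAddTorus d, ℂ)}
    (hf : f ∈ closure s) : torusDiscrepancy t f =o[l] fun N ↦ N * log N := by
  refine .of_bound fun ε hε ↦ ?_
  obtain ⟨g, hg, hfg⟩ := Metric.mem_closure_iff.mp hf (ε / 24) (by positivity)
  filter_upwards [(hs g hg).bound (half_pos hε)] with N hN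
  have hsplit : torusDiscrepancy t f N = torusDiscrepancy t g N + torusDiscrepancy t (f - g) N := by
    rw [← torusDiscrepancy_add, add_sub_cancel]
  calc ‖torusDiscrepancy t f N‖
      ≤ ε / 2 * ‖N * log N‖ + 12 * ‖f - g‖ * (N * log N) :=
        hsplit ▸ norm_add_le_of_le hN (norm_torusDiscrepancy_le t _ N)
    _ ≤ ε / 2 * ‖N * log N‖ + 12 * (ε / 24) * ‖N * log N‖ := by
        rw [dist_eq_norm] at hfg
        gcongr
        exact le_norm_self _
    _ = _ := by ring

theorem torusDiscrepancy_isLittleO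
    (hl : ∀ α, Irrational α → (fun N ↦ vonMangoldtLogSum N α) =o[l] fun N : ℕ ↦ N * log N)
    (hθ : ∀ h : d → ℤ, h ≠ 0 → Irrational (∑ i, h i * θ i)) (f : C(UnitAddTorus d, ℂ)) :
    torusDiscrepancy (fun i ↦ (θ i : UnitAddCircle)) f =o[l] fun N ↦ N * log N := by
  have hf : f ∈
      (Submodule.span ℂ (Set.range (UnitAddTorus.mFourier (d := d)))).topologicalClosure :=
    UnitAddTorus.span_mFourier_closure_eq_top (d := d) ▸ Submodule.mem_top
  refine torusDiscrepancy_isLittleO_of_mem_closure (fun g hg ↦ ?_) hf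
  induction hg using Submodule.span_induction with
  | mem g hg =>
    obtain ⟨h, rfl⟩ := hg
    exact torusDiscrepancy_mFourier_isLittleO hl hθ h
  | zero =>
    refine (isLittleO_zero _ _).congr_left fun N ↦ ?_
    simp [torusDiscrepancy]
  | add f g _ _ hf hg => exact (hf.add hg).congr_left fun N ↦ (torusDiscrepancy_add _ f g N).symm
  | smul c f _ hf =>
    exact (hf.const_mul_left c).congr_left fun N ↦ (torusDiscrepancy_smul _ c f N).symm

theorem integral_eq_zero_of_forall_prime [l.NeBot] (hl : l ≤ atTop)
    {f : C(UnitAddTorus d, ℂ)} (hf : torusDiscrepancy t f =o[l] fun N ↦ N * log N)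
    (hprime : ∀ p : ℕ, p.Prime → f (p • t) = 0) : ∫ u, f u = 0 := by
  have hsplit (N : ℕ) : (∑ n ∈ Ioc 0 N, Λ n * log n : ℝ) * ∫ u, f u =
      ∑ n ∈ Ioc 0 N with ¬n.Prime, (Λ n * log n : ℝ) * f (n • t) - torusDiscrepancy t f N := by
    have hsum : ∑ n ∈ Ioc 0 N with ¬n.Prime, (Λ n * log n : ℝ) * f (n • t) =
        ∑ n ∈ Ioc 0 N, (Λ n * log n : ℝ) * f (n • t) :=
      sum_filter_of_ne fun n _ hn hp ↦ hn (by rw [hprime n hp, mul_zero])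
    simp only [hsum, torusDiscrepancy, mul_sub, sum_sub_distrib, sub_sub_cancel, ← sum_mul,
      Complex.ofReal_sum]
  have hnotPrime : (fun N : ℕ ↦ ∑ n ∈ Ioc 0 N with ¬n.Prime, (Λ n * log n : ℝ) * f (n • t)) =o[l]
      fun N ↦ N * log N := by
    refine (IsBigO.of_bound ‖f‖ (.of_forall fun N ↦ ?_)).trans_isLittleO
      (isLittleO_sum_vonMangoldt_mul_log_not_prime.mono hl)
    rw [mul_comm]
    refine (norm_sum_le_of_le _ fun n _ ↦ ?_).trans ((sum_mul _ _ _).symm.trans_le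
      (mul_le_mul_of_nonneg_right (le_norm_self _) (norm_nonneg f)))
    have : 0 ≤ Λ n := vonMangoldt_nonneg
    rw [norm_mul, Complex.norm_real, norm_of_nonneg (by positivity)]
    gcongr
    exact f.norm_coe_le_norm _
  by_contra hI
  have hlarge : (fun N : ℕ ↦ N * log N) =O[l]
      fun N ↦ ((∑ n ∈ Ioc 0 N, Λ n * log n : ℝ) : ℂ) * ∫ u, f u := by
    refine ((isBigO_natCast_mul_log_sum_vonMangoldt_mul_log.mono hl).trans ?_)
    refine .of_bound ‖∫ u, f u‖⁻¹ (.of_forall fun N ↦ ?_)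
    rw [norm_mul, Complex.norm_real, mul_comm, mul_inv_cancel_right₀ (norm_ne_zero_iff.mpr hI)]
  refine isLittleO_irrefl ?_
    (hlarge.trans_isLittleO ((hnotPrime.sub hf).congr_left fun N ↦ (hsplit N).symm))
  refine ((tendsto_natCast_atTop_atTop.atTop_mul_atTop₀ tendsto_log_natCast_atTop).mono_left
    hl).eventually_ne_atTop 0 |>.frequently

theorem dense_image_nsmul_primes
    (hθ : ∀ h : d → ℤ, h ≠ 0 → Irrational (∑ i, h i * θ i)) :
    Dense ((fun p : ℕ ↦ p • fun i ↦ (θ i : UnitAddCircle)) '' {p | p.Prime}) := by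
  obtain ⟨l, hne, hl, hsum⟩ := exists_neBot_filter_forall_isLittleO_vonMangoldtLogSum
  set S := (fun p : ℕ ↦ p • fun i ↦ (θ i : UnitAddCircle)) '' {p | p.Prime}
  by_contra hdense
  obtain ⟨y, hy⟩ : ∃ y, y ∉ closure S := by simpa [Dense] using hdense
  let f : C(UnitAddTorus d, ℂ) := ⟨fun u ↦ (Metric.infDist u S : ℂ), by fun_prop⟩
  have hf : ∫ u, f u = 0 := by
    refine integral_eq_zero_of_forall_prime hl (torusDiscrepancy_isLittleO hsum hθ f) fun p hp ↦ ?_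
    exact Complex.ofReal_eq_zero.mpr (Metric.infDist_zero_of_mem (Set.mem_image_of_mem _ hp))
  have hpos : 0 < ∫ u, Metric.infDist u S := by
    refine (Metric.continuous_infDist_pt S).integral_pos_of_hasCompactSupport_nonneg_nonzero
      (x := y) (.of_compactSpace _) (fun _ ↦ Metric.infDist_nonneg) fun h ↦ hy ?_
    exact (Metric.mem_closure_iff_infDist_zero (Set.Nonempty.image _ ⟨2, Nat.prime_two⟩)).mpr h
  exact hpos.ne' (Complex.ofReal_eq_zero.mp (integral_ofReal.symm.trans hf))

end Equidistribution

section FractionalParts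

open Filter Topology

theorem eventually_nhds_coe_abs_fract_sub_lt {x ε : ℝ} (hx : x ∈ Set.Ioo 0 1) (hε : 0 < ε) :
    ∀ᶠ u in 𝓝 (x : UnitAddCircle), ∀ y : ℝ, (y : UnitAddCircle) = u → |Int.fract y - x| < ε := by
  have hfract (y : ℝ) : (AddCircle.equivIco 1 0 (y : UnitAddCircle) : ℝ) = Int.fract y := by
    simp
  have hx_fract : Int.fract x = x := Int.fract_eq_self.mpr ⟨hx.1.le, hx.2⟩
  have hne : (x : UnitAddCircle) ≠ (0 : ℝ) := fun h ↦ hx.1.ne' <| by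
    rw [← hx_fract, ← hfract, h, hfract, Int.fract_zero]
  have hcont := continuousAt_subtype_val.comp (AddCircle.continuousAt_equivIco (1 : ℝ) 0 hne)
  filter_upwards [Metric.tendsto_nhds.mp hcont ε hε] with u hu
  rintro y rfl
  rwa [Function.comp_apply, Function.comp_apply, hfract, hfract,
    hx_fract] at hu

theorem irrational_sum_mul_of_linearIndependent {d : Type*} [Fintype d] {θ : d → ℝ}
    (hθ : ∀ (c₀ : ℤ) (c : d → ℤ), c₀ + ∑ i, c i * θ i = 0 → c₀ = 0 ∧ ∀ i, c i = 0)
    {h : d → ℤ} (hh : h ≠ 0) : Irrational (∑ i, h i * θ i) := by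
  rintro ⟨r, hr⟩
  have hrel := hθ (-r.num) (fun i ↦ r.den * h i) <| by
    push_cast
    rw [sum_congr rfl fun i _ ↦ mul_assoc _ _ _, ← mul_sum, ← hr, neg_add_eq_zero]
    exact_mod_cast (Rat.den_mul_eq_num r).symm
  exact hh (funext fun i ↦ by simpa using hrel.2 i)

end FractionalParts

end PrimeExponentialSums

/-- Harman's multidimensional generalization of Vinogradov's theorem. -/
theorem stmt2 (k : ℕ) (θ : Fin k → ℝ)
    (hind : ∀ (c₀ : ℤ) (c : Fin k → ℤ),
      (c₀ : ℝ) + ∑ i, (c i : ℝ) * θ i = 0 → c₀ = 0 ∧ ∀ i, c i = 0) :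
    ∀ x : Fin k → ℝ, (∀ i, x i ∈ Set.Ioo (0 : ℝ) 1) → ∀ ε : ℝ, 0 < ε →
      ∃ j : ℕ, ∀ i, |Int.fract ((Nat.nth Nat.Prime j : ℝ) * θ i) - x i| < ε := by
  intro x hx ε hε
  have hdense := dense_image_nsmul_primes fun h (hh : h ≠ 0) ↦
    irrational_sum_mul_of_linearIndependent hind hh
  have hnear : ∀ᶠ u : UnitAddTorus (Fin k) in nhds fun i ↦ (x i : UnitAddCircle),
      ∀ i, ∀ y : ℝ, (y : UnitAddCircle) = u i → |Int.fract y - x i| < ε := by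
    rw [nhds_pi]
    exact Filter.eventually_pi fun i ↦ eventually_nhds_coe_abs_fract_sub_lt (hx i) hε
  obtain ⟨_, ⟨p, (hp : p.Prime), rfl⟩, hfract⟩ := hdense.inter_nhds_nonempty hnear
  refine ⟨Nat.count Nat.Prime p, fun i ↦ ?_⟩
  rw [Nat.nth_count hp]
  exact hfract i _ (by simp [← nsmul_eq_mul])
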